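/- arXiv:2503.00869 — 5 statements merged into one kernel-verified Lean document; each statement's English description precedes it below -/
import Mathlib

section
/- Let Ω ⊂ ℝⁿ be open, let p ≥ 2, let k ∈ {1,…,n}, and let u ∈ C²(Ω) be bounded on Ω with ‖u‖_∞ = sup_Ω |u|. Then there exist constants C = C(n,p) > 0 and γ = γ(p) > 0 such that for every pair of concentric balls B_ρ ⊂ B_R ⋐ Ω: ∫_{B_ρ} |u_{x_k}|^{p+2} dx ≤ C ‖u‖_∞² ( ∫_{B_R} |u_{x_k x_k}|² |u_{x_k}|^{p−2} dx + (1/(R−ρ))^γ ∫_{B_R} |u_{x_k}|^{p} dx ). -/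
open MeasureTheory Metric

/-- The `k`-th partial derivative of `u`. -/
noncomputable def pderiv1 {n : ℕ} (u : EuclideanSpace ℝ (Fin n) → ℝ) (k : Fin n)
    (x : EuclideanSpace ℝ (Fin n)) : ℝ :=
  fderiv ℝ u x (EuclideanSpace.single k 1)

theorem st_deriv_bound : ∃ L : ℝ, 0 ≤ L ∧ ∀ s, |deriv Real.smoothTransition s| ≤ L := by
  have hc : Continuous (deriv Real.smoothTransition) :=
    (Real.smoothTransition.contDiff (n := 1)).continuous_deriv (by norm_num)
  have hs : HasCompactSupport (deriv Real.smoothTransition) := by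
    refine HasCompactSupport.intro (isCompact_Icc (a := (0:ℝ)) (b := 1)) ?_
    intro x hx
    rw [Set.mem_Icc, not_and_or, not_le, not_le] at hx
    rcases hx with hx | hx
    · have : Real.smoothTransition =ᶠ[nhds x] fun _ => (0:ℝ) := by
        filter_upwards [Iio_mem_nhds hx] with y hy
        exact Real.smoothTransition.zero_of_nonpos (le_of_lt hy)
      rw [this.deriv_eq]; simp
    · have : Real.smoothTransition =ᶠ[nhds x] fun _ => (1:ℝ) := by
        filter_upwards [Ioi_mem_nhds hx] with y hy
        exact Real.smoothTransition.one_of_one_le (le_of_lt hy)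
      rw [this.deriv_eq]; simp
  obtain ⟨L, hL⟩ := hc.bounded_above_of_compact_support hs
  exact ⟨L, (norm_nonneg _).trans (hL 0), hL⟩

theorem cutoff_exists : ∃ K : ℝ, 0 ≤ K ∧ ∀ (n : ℕ) (k : Fin n) (x₀ : EuclideanSpace ℝ (Fin n))
    (ρ R : ℝ), 0 < ρ → ρ < R → ∃ η : EuclideanSpace ℝ (Fin n) → ℝ, ContDiff ℝ 1 η ∧
      (∀ x, 0 ≤ η x) ∧ (∀ x, η x ≤ 1) ∧ (∀ x ∈ ball x₀ ρ, η x = 1) ∧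
      (∀ x, x ∉ ball x₀ R → η x = 0) ∧
      (∀ x ∈ ball x₀ R, |pderiv1 η k x| ≤ K * (1 / (R - ρ))) := by
  obtain ⟨L, hL0, hL⟩ := st_deriv_bound
  refine ⟨2 * L, by positivity, ?_⟩
  intro n k x₀ ρ R hρ hR
  have hd : 0 < R ^ 2 - ρ ^ 2 := by nlinarith
  have hd' : 0 < R - ρ := by linarith
  set s : EuclideanSpace ℝ (Fin n) → ℝ := fun x => (R ^ 2 - ‖x - x₀‖ ^ 2) / (R ^ 2 - ρ ^ 2) with hs
  have hsc : ContDiff ℝ 1 s := by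
    have : ContDiff ℝ 1 fun x : EuclideanSpace ℝ (Fin n) => ‖x - x₀‖ ^ 2 :=
      (contDiff_id.sub contDiff_const).norm_sq ℝ
    exact (contDiff_const.sub this).div_const _
  refine ⟨fun x => Real.smoothTransition (s x),
    (Real.smoothTransition.contDiff (n := 1)).comp hsc,
    fun x => Real.smoothTransition.nonneg _, fun x => Real.smoothTransition.le_one _, ?_, ?_, ?_⟩
  · intro x hx
    apply Real.smoothTransition.one_of_one_le
    rw [mem_ball_iff_norm] at hx
    rw [hs]; simp only
    rw [le_div_iff₀ hd]
    nlinarith [norm_nonneg (x - x₀)]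
  · intro x hx
    apply Real.smoothTransition.zero_of_nonpos
    rw [mem_ball_iff_norm, not_lt] at hx
    apply div_nonpos_of_nonpos_of_nonneg _ hd.le
    nlinarith
  · intro x hx
    rw [mem_ball_iff_norm] at hx
    have h2 : HasFDerivAt (fun x : EuclideanSpace ℝ (Fin n) => ‖x - x₀‖ ^ 2) _ x :=
      ((hasFDerivAt_id x).sub_const x₀).norm_sq
    have h3 := (h2.const_sub (R ^ 2)).const_mul ((R ^ 2 - ρ ^ 2)⁻¹)
    have h1 := h3.congr_of_eventuallyEq (f₁ := s) (Filter.Eventually.of_forall fun y => by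
      simp only [hs]
      rw [div_eq_inv_mul])
    have h4 : HasDerivAt Real.smoothTransition (deriv Real.smoothTransition (s x)) (s x) :=
      (((Real.smoothTransition.contDiff (n := 1)).differentiable (by norm_num)) _).hasDerivAt
    have h5 := h4.comp_hasFDerivAt x h1
    have h6 : pderiv1 (fun x => Real.smoothTransition (s x)) k x =
        deriv Real.smoothTransition (s x) * ((R ^ 2 - ρ ^ 2)⁻¹ *
          (-(2 * inner ℝ (x - x₀) (EuclideanSpace.single k (1:ℝ))))) := by
      unfold pderiv1
      have := h5.fderiv
      rw [show (fun x => Real.smoothTransition (s x)) = Real.smoothTransition ∘ s from rfl, this]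
      simp [inner_sub_left]
    rw [h6, abs_mul, abs_mul, abs_neg, abs_mul, abs_of_pos (inv_pos.2 hd), abs_two]
    have h7 : |inner ℝ (x - x₀) (EuclideanSpace.single k (1:ℝ))| ≤ R := by
      refine (abs_real_inner_le_norm _ _).trans ?_
      simpa using hx.le
    have h8 : (R ^ 2 - ρ ^ 2)⁻¹ * (2 * |inner ℝ (x - x₀) (EuclideanSpace.single k (1:ℝ))|)
        ≤ 2 * (1 / (R - ρ)) := by
      calc _ ≤ (R ^ 2 - ρ ^ 2)⁻¹ * (2 * R) := by gcongr
        _ ≤ _ := by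
          rw [inv_mul_le_iff₀ hd]
          have : (R ^ 2 - ρ ^ 2) * (2 * (1 / (R - ρ))) = 2 * (R + ρ) := by
            field_simp; ring
          rw [this]; linarith
    calc _ ≤ L * (2 * (1 / (R - ρ))) := by
          apply mul_le_mul (hL _) h8 (by positivity) hL0
      _ = _ := by ring

theorem hasDerivAt_phi (p : ℝ) (hp : 2 ≤ p) (t : ℝ) :
    HasDerivAt (fun t : ℝ => |t| ^ p * t) ((p + 1) * |t| ^ p) t := by
  have h := (hasDerivAt_abs_rpow t (p := p) (by linarith)).mul (hasDerivAt_id t)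
  have h' : HasDerivAt (fun t : ℝ => |t| ^ p * t) _ t := h
  refine h'.congr_deriv ?_
  rcases eq_or_ne t 0 with rfl | ht
  · have : p ≠ 0 := by linarith
    simp [Real.zero_rpow this]
  · have : |t| ^ p = |t| ^ (p - 2) * t ^ 2 := by
      have := Real.rpow_add (abs_pos.2 ht) (p - 2) 2
      rw [sub_add_cancel] at this
      rw [this]; norm_num
    simp only [id]
    rw [this]; ring

/-- Interpolation estimate (Brasco et al., Prop. 4.3): for bounded `u ∈ C²(Ω)` and `p ≥ 2`,
`∫_{B_ρ} |u_{x_k}|^{p+2} ≤ C ‖u‖_∞² ( ∫_{B_R} |u_{x_k x_k}|² |u_{x_k}|^{p-2}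
+ (1/(R-ρ))^γ ∫_{B_R} |u_{x_k}|^p )` with `C = C(n,p)` and `γ = γ(p)`. -/
theorem caccioppoli_interpolation (n : ℕ) (p : ℝ) (hp : 2 ≤ p) :
    ∃ C > (0 : ℝ), ∃ γ > (0 : ℝ),
      ∀ Ω : Set (EuclideanSpace ℝ (Fin n)), IsOpen Ω →
      ∀ u : EuclideanSpace ℝ (Fin n) → ℝ, ContDiffOn ℝ 2 u Ω →
      ∀ Mu : ℝ, (∀ x ∈ Ω, |u x| ≤ Mu) →
      ∀ k : Fin n, ∀ (x₀ : EuclideanSpace ℝ (Fin n)) (ρ R : ℝ),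
        0 < ρ → ρ < R → closedBall x₀ R ⊆ Ω →
        ∫ x in ball x₀ ρ, |pderiv1 u k x| ^ (p + 2) ≤
          C * Mu ^ 2 *
            ((∫ x in ball x₀ R, |pderiv1 (pderiv1 u k) k x| ^ 2 * |pderiv1 u k x| ^ (p - 2))
              + (1 / (R - ρ)) ^ γ * ∫ x in ball x₀ R, |pderiv1 u k x| ^ p) := by
  obtain ⟨K, hK0, hK⟩ := cutoff_exists
  refine ⟨2 * (p + 1) ^ 2 + 8 * K ^ 2, by positivity, 2, by norm_num, ?_⟩
  intro Ω hΩ u hu Mu hMu k x₀ ρ R hρ hR hsub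
  obtain ⟨η, hηc, hη0, hη1, hηρ, hηR, hηk⟩ := hK n k x₀ ρ R hρ hR
  set e : EuclideanSpace ℝ (Fin n) := EuclideanSpace.single k 1 with he
  have hd : 0 < R - ρ := by linarith
  set v := pderiv1 u k with hv
  set w := pderiv1 v k with hw
  set ζ := pderiv1 η k with hζ
  have hvC : ContDiffOn ℝ 1 v Ω :=
    (hu.fderiv_of_isOpen hΩ (m := 1) (by norm_num)).clm_apply contDiffOn_const
  have hwC : ContinuousOn w Ω :=
    (hvC.continuousOn_fderiv_of_isOpen hΩ le_rfl).clm_apply continuousOn_const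
  have hζC : Continuous ζ := (hηc.continuous_fderiv (by norm_num)).clm_apply continuous_const
  have hηC := hηc.continuous
  have huC := hu.continuousOn
  have hvc := hvC.continuousOn
  have hpow : ∀ q : ℝ, 0 ≤ q → ContinuousOn (fun x => |v x| ^ q) Ω := fun q hq =>
    hvc.abs.rpow_const fun x _ => Or.inr hq
  set F : EuclideanSpace ℝ (Fin n) → ℝ := fun x => u x * (η x ^ 2 * (|v x| ^ p * v x)) with hF
  set D : EuclideanSpace ℝ (Fin n) → ℝ := fun x => v x * (η x ^ 2 * (|v x| ^ p * v x)) +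
    u x * (2 * η x * ζ x * (|v x| ^ p * v x) + η x ^ 2 * ((p + 1) * |v x| ^ p * w x)) with hD
  have hder : ∀ x, DifferentiableAt ℝ F x ∧ fderiv ℝ F x e = D x := by
    intro x
    by_cases hx : x ∈ closedBall x₀ R
    · have hxΩ := hsub hx
      have h1 : HasFDerivAt u (fderiv ℝ u x) x :=
        ((hu.contDiffAt (hΩ.mem_nhds hxΩ)).differentiableAt (by norm_num)).hasFDerivAt
      have h2 : HasFDerivAt v (fderiv ℝ v x) x :=
        ((hvC.contDiffAt (hΩ.mem_nhds hxΩ)).differentiableAt (by norm_num)).hasFDerivAt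
      have h3 : HasFDerivAt η (fderiv ℝ η x) x :=
        (hηc.differentiable (by norm_num) x).hasFDerivAt
      have h4 := (hasDerivAt_phi p hp (v x)).comp_hasFDerivAt x h2
      have h5 := h1.mul ((h3.pow 2).mul h4)
      have h6 : HasFDerivAt F _ x := h5
      refine ⟨h6.differentiableAt, ?_⟩
      rw [h6.fderiv]
      have e1 : fderiv ℝ u x e = v x := rfl
      have e2 : fderiv ℝ v x e = w x := rfl
      have e3 : fderiv ℝ η x e = ζ x := rfl
      simp [e1, e2, e3, hD]
      ring
    · have h0 : F =ᶠ[nhds x] fun _ => (0:ℝ) := by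
        filter_upwards [isClosed_closedBall.isOpen_compl.mem_nhds hx] with y hy
        have : η y = 0 := hηR y fun h => hy (ball_subset_closedBall h)
        simp [hF, this]
      have : η x = 0 := hηR x fun h => hx (ball_subset_closedBall h)
      refine ⟨(differentiableAt_const (0:ℝ)).congr_of_eventuallyEq h0, ?_⟩
      rw [h0.fderiv_eq]
      simp [hD, this]
  have hFC : ContinuousOn F Ω :=
    huC.mul ((hηC.continuousOn.pow 2).mul ((hpow p (by linarith)).mul hvc))
  have hDC : ContinuousOn D Ω :=
    (hvc.mul ((hηC.continuousOn.pow 2).mul ((hpow p (by linarith)).mul hvc))).add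
      (huC.mul ((((continuousOn_const.mul hηC.continuousOn).mul hζC.continuousOn).mul
        ((hpow p (by linarith)).mul hvc)).add ((hηC.continuousOn.pow 2).mul
          ((continuousOn_const.mul (hpow p (by linarith))).mul hwC))))
  have hint : ∀ g : EuclideanSpace ℝ (Fin n) → ℝ, ContinuousOn g Ω →
      IntegrableOn g (ball x₀ R) := fun g hg =>
    ((hg.mono hsub).integrableOn_compact (isCompact_closedBall x₀ R)).mono_set
      ball_subset_closedBall
  have hFI : Integrable F := (hint F hFC).integrable_of_forall_notMem_eq_zero fun x hx => by
    simp [hF, hηR x hx]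
  have hD0 : ∀ x, x ∉ ball x₀ R → D x = 0 := fun x hx => by simp [hD, hηR x hx]
  have hDI : Integrable D := (hint D hDC).integrable_of_forall_notMem_eq_zero hD0
  have hzero : ∫ x in ball x₀ R, D x = 0 := by
    rw [setIntegral_eq_integral_of_forall_compl_eq_zero hD0]
    have hfe : (fun x => fderiv ℝ F x e) = D := funext fun x => (hder x).2
    have := integral_mul_fderiv_eq_neg_fderiv_mul_of_integrable (μ := volume) (𝕜 := ℝ)
      (f := fun _ : EuclideanSpace ℝ (Fin n) => (1:ℝ)) (g := F) (v := e)
      (by simp) (by simpa [hfe] using hDI) (by simpa using hFI)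
      (fun x _ => differentiableAt_const _) (fun x _ => (hder x).1)
    simpa [hfe] using this
  set A := fun x => |w x| ^ 2 * |v x| ^ (p - 2) with hA
  set B := fun x => |v x| ^ p with hB
  have hAI : IntegrableOn A (ball x₀ R) :=
    hint A ((hwC.abs.pow 2).mul (hpow (p - 2) (by linarith)))
  have hBI : IntegrableOn B (ball x₀ R) := hint B (hpow p (by linarith))
  have hEI : IntegrableOn (fun x => η x ^ 2 * |v x| ^ (p + 2)) (ball x₀ R) :=
    hint _ ((hηC.continuousOn.pow 2).mul (hpow (p + 2) (by linarith)))
  set δ := 1 / (R - ρ) with hδ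
  have hpt : ∀ x ∈ ball x₀ R, η x ^ 2 * |v x| ^ (p + 2) ≤
      2 * D x + (2 * (p + 1) ^ 2 * Mu ^ 2 * A x + 8 * K ^ 2 * Mu ^ 2 * δ ^ 2 * B x) := by
    intro x hx
    have hxΩ := hsub (ball_subset_closedBall hx)
    have hq : 0 ≤ |v x| ^ (p - 2) := by positivity
    have hvp : |v x| ^ p = |v x| ^ (p - 2) * v x ^ 2 := by
      have := Real.rpow_add_of_nonneg (abs_nonneg (v x)) (by linarith : 0 ≤ p - 2) zero_le_two
      rw [sub_add_cancel] at this
      rw [this]; norm_num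
    have hvp2 : |v x| ^ (p + 2) = |v x| ^ (p - 2) * v x ^ 4 := by
      have := Real.rpow_add_of_nonneg (abs_nonneg (v x)) (by linarith : 0 ≤ p) zero_le_two
      rw [this, hvp]; norm_num; ring
    have hu2 : u x ^ 2 ≤ Mu ^ 2 := sq_le_sq' (by linarith [abs_le.1 (hMu x hxΩ)])
      (abs_le.1 (hMu x hxΩ)).2
    have hz2 : ζ x ^ 2 ≤ K ^ 2 * δ ^ 2 := by
      rw [← mul_pow, ← sq_abs]
      exact pow_le_pow_left₀ (abs_nonneg _) (hηk x hx) 2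
    have hη2 : η x ^ 2 ≤ 1 := pow_le_one₀ (hη0 x) (hη1 x)
    simp only [hA, hB, hD]
    rw [hvp2, hvp, sq_abs]
    generalize |v x| ^ (p - 2) = q at *
    have i1 : u x ^ 2 * η x ^ 2 ≤ Mu ^ 2 := by
      calc _ ≤ Mu ^ 2 * 1 := by gcongr
        _ = _ := by ring
    have i2 : u x ^ 2 * ζ x ^ 2 ≤ Mu ^ 2 * (K ^ 2 * δ ^ 2) := by gcongr
    have j1 : 0 ≤ (2 * (p + 1) ^ 2 * w x ^ 2 * q) * (Mu ^ 2 - u x ^ 2 * η x ^ 2) :=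
      mul_nonneg (by positivity) (by linarith)
    have j2 : 0 ≤ (8 * v x ^ 2 * q) * (Mu ^ 2 * (K ^ 2 * δ ^ 2) - u x ^ 2 * ζ x ^ 2) :=
      mul_nonneg (by positivity) (by linarith)
    have j3 : 0 ≤ 2 * q * ((1 / 2 * η x * v x ^ 2 + u x * (p + 1) * η x * w x) ^ 2 +
      (1 / 2 * η x * v x ^ 2 + 2 * u x * ζ x * v x) ^ 2) := by positivity
    linear_combination j1 + j2 + j3
  have hI0 : 0 ≤ ∫ x in ball x₀ R, A x :=
    integral_nonneg fun x => by simp only [hA]; positivity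
  have hJ0 : 0 ≤ ∫ x in ball x₀ R, B x :=
    integral_nonneg fun x => by simp only [hB]; positivity
  have step1 : ∫ x in ball x₀ ρ, |v x| ^ (p + 2) ≤
      ∫ x in ball x₀ R, η x ^ 2 * |v x| ^ (p + 2) := by
    have : ∫ x in ball x₀ ρ, |v x| ^ (p + 2) =
        ∫ x in ball x₀ ρ, η x ^ 2 * |v x| ^ (p + 2) :=
      setIntegral_congr_fun measurableSet_ball fun x hx => by simp [hηρ x hx]
    rw [this]
    refine setIntegral_mono_set hEI (Filter.Eventually.of_forall fun x => ?_)
      (ball_subset_ball hR.le).eventuallyLE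
    simp only [Pi.zero_apply]; positivity
  have step2 : ∫ x in ball x₀ R, η x ^ 2 * |v x| ^ (p + 2) ≤
      2 * (p + 1) ^ 2 * Mu ^ 2 * (∫ x in ball x₀ R, A x) +
        8 * K ^ 2 * Mu ^ 2 * δ ^ 2 * ∫ x in ball x₀ R, B x := by
    have i1 := hDI.integrableOn (s := ball x₀ R) |>.const_mul 2
    have i2 := hAI.const_mul (2 * (p + 1) ^ 2 * Mu ^ 2)
    have i3 := hBI.const_mul (8 * K ^ 2 * Mu ^ 2 * δ ^ 2)
    have := setIntegral_mono_on hEI (i1.add (i2.add i3)) measurableSet_ball hpt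
    refine this.trans (le_of_eq ?_)
    rw [integral_add' i1 (i2.add i3), integral_add' i2 i3, integral_const_mul,
      integral_const_mul, integral_const_mul, hzero]
    ring
  have hrp : δ ^ (2:ℝ) = δ ^ 2 := by norm_num
  rw [hrp]
  refine (step1.trans step2).trans ?_
  generalize (∫ x in ball x₀ R, A x) = I at *
  generalize (∫ x in ball x₀ R, B x) = J at *
  have k1 : 0 ≤ 8 * K ^ 2 * Mu ^ 2 * I := by positivity
  have k2 : 0 ≤ 2 * (p + 1) ^ 2 * Mu ^ 2 * (δ ^ 2 * J) := by positivity
  linear_combination k1 + k2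
end

section
/- (Sobolev–Troisi inequality, case p̄ < n.) Let E ⊂ ℝⁿ be a bounded open set, let p_i ≥ 1 for i = 1,…,n, set 1/p̄ = (1/n) Σ_{i=1}^n (1/p_i) and p̄* = n p̄/(n − p̄), and assume p̄ < n. Then there exists a constant γ > 0 depending only on n, p₁,…,pₙ such that for every u ∈ C_c^∞(E): ‖u‖_{L^{p̄*}(E)} ≤ γ Σ_{i=1}^n ‖∂_i u‖_{L^{p_i}(E)}. -/
open MeasureTheory

open scoped ENNReal NNReal in
lemma troisi_line {w : ℝ → ℝ} (hw : ContDiff ℝ 1 w) (hc : HasCompactSupport w) {b : ℝ}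
    (hb : 0 ≤ b) (x : ℝ) :
    ‖w x‖ₑ ^ (1 + b) ≤ ENNReal.ofReal (1 + b) * ∫⁻ t, ‖w t‖ₑ ^ b * ‖deriv w t‖ₑ := by
  rcases hb.eq_or_lt with rfl | hb
  · simp only [add_zero, ENNReal.rpow_one, ENNReal.ofReal_one, ENNReal.rpow_zero, one_mul]
    exact (HasCompactSupport.enorm_le_lintegral_Ici_deriv hw hc x).trans
      (lintegral_mono' Measure.restrict_le_self le_rfl)
  · have h1 : 1 < 1 + b := by linarith
    have hcd : ContDiff ℝ 1 (fun t => ‖w t‖ ^ (1 + b)) := hw.norm_rpow h1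
    have hcs : HasCompactSupport (fun t => ‖w t‖ ^ (1 + b)) :=
      hc.comp_left (g := fun y : ℝ => ‖y‖ ^ (1 + b)) (by
        simp [Real.zero_rpow (by linarith : 1 + b ≠ 0)])
    have h := HasCompactSupport.enorm_le_lintegral_Ici_deriv hcd hcs x
    have e1 : ‖‖w x‖ ^ (1 + b)‖ₑ = ‖w x‖ₑ ^ (1 + b) := by
      rw [Real.enorm_rpow_of_nonneg (norm_nonneg _) (by linarith), enorm_norm]
    rw [e1] at h
    refine h.trans ((lintegral_mono' Measure.restrict_le_self le_rfl).trans ?_)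
    rw [← lintegral_const_mul' _ _ ENNReal.ofReal_ne_top]
    refine lintegral_mono fun t => ?_
    have hd : HasDerivAt (fun t => ‖w t‖ ^ (1 + b))
        ((1 + b) * |w t| ^ (1 + b - 2) * w t * deriv w t) t := by
      have := (hasDerivAt_abs_rpow (w t) h1).comp t
        ((hw.differentiable one_ne_zero).differentiableAt.hasDerivAt (x := t))
      simpa [Function.comp_def] using this
    dsimp only
    rw [hd.deriv, enorm_mul, ← mul_assoc]
    refine le_of_eq ?_
    congr 1
    rw [← enorm_norm (w t), ← Real.enorm_rpow_of_nonneg (norm_nonneg _) hb.le, 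
      ← Real.enorm_of_nonneg (by linarith : 0 ≤ 1 + b), ← enorm_mul]
    rw [← enorm_norm, ← enorm_norm ((1 + b) * ‖w t‖ ^ b)]
    congr 1
    rw [norm_mul, norm_mul, norm_mul, mul_assoc]
    congr 1
    rcases eq_or_ne (w t) 0 with h0 | h0
    · simp [h0, Real.zero_rpow hb.ne']
    · have : 0 < |w t| := abs_pos.2 h0
      simp only [Real.norm_eq_abs]
      rw [abs_of_nonneg (Real.rpow_nonneg this.le _), abs_of_nonneg (Real.rpow_nonneg this.le _)]
      nth_rewrite 2 [← Real.rpow_one |w t|]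
      rw [← Real.rpow_add this]
      congr 1
      ring

open scoped ENNReal NNReal in
lemma troisi_core {n : ℕ} (hn : 2 ≤ n) (p : Fin n → ℝ) (hp : ∀ i, 1 ≤ p i) {q : ℝ} (hq : 0 < q)
    (hpq : ∑ i, (1 - 1 / p i) = (n : ℝ) - 1 - n / q)
    {v : (Fin n → ℝ) → ℝ} (hv : ContDiff ℝ 1 v) (hc : HasCompactSupport v)
    (hA0 : ∫⁻ x, ‖v x‖ₑ ^ q ≠ 0) (hAt : ∫⁻ x, ‖v x‖ₑ ^ q ≠ ∞) :
    (∫⁻ x, ‖v x‖ₑ ^ q) ^ (1 / q) ≤ ENNReal.ofReal (1 + q) *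
      ∑ i, (∫⁻ x, ‖fderiv ℝ v x (Pi.single i 1)‖ₑ ^ p i) ^ (1 / p i) := by
  set A := ∫⁻ x, ‖v x‖ₑ ^ q with hA
  set S := ∑ i, (∫⁻ x, ‖fderiv ℝ v x (Pi.single i 1)‖ₑ ^ p i) ^ (1 / p i) with hS
  set K := ENNReal.ofReal (1 + q) with hK
  let a : Fin n → ℝ := fun i => 1 - 1 / p i
  have ha0 : ∀ i, 0 ≤ a i := fun i => by
    have : 1 / p i ≤ 1 := by rw [div_le_one (by linarith [hp i])]; exact hp i
    simp only [a]; linarith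
  have ha1 : ∀ i, a i ≤ 1 := fun i => by
    have : 0 ≤ 1 / p i := by have := hp i; positivity
    simp only [a]; linarith
  have hn' : (2 : ℝ) ≤ n := by exact_mod_cast hn
  have hvm : Measurable v := hv.continuous.measurable
  have hgm : ∀ i, Measurable fun x => fderiv ℝ v x (Pi.single i 1) := fun i =>
    ((hv.continuous_fderiv one_ne_zero).clm_apply continuous_const).measurable
  have hmm : ∀ i, Measurable fun x =>
      ‖v x‖ₑ ^ (q * a i) * ‖fderiv ℝ v x (Pi.single i 1)‖ₑ := fun i =>
    (hvm.enorm.pow_const _).mul (hgm i).enorm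
  let f : (Fin n → ℝ) → ℝ≥0∞ := fun x =>
    ∑ i, A ^ (-a i) * (‖v x‖ₑ ^ (q * a i) * ‖fderiv ℝ v x (Pi.single i 1)‖ₑ)
  have hfm : Measurable f := by
    refine Finset.measurable_sum _ fun i _ => ?_
    exact (hmm i).const_mul _
  have hfS : ∫⁻ x, f x ≤ S := by
    simp only [f]
    rw [lintegral_finsetSum _ fun i _ =>
      (hmm i).const_mul _]
    refine Finset.sum_le_sum fun i _ => ?_
    rw [lintegral_const_mul _ (hmm i)]
    have hpi : 0 < p i := by linarith [hp i]
    have h := ENNReal.lintegral_mul_norm_pow_le (μ := (volume : Measure (Fin n → ℝ)))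
      (f := fun x => ‖v x‖ₑ ^ q) (g := fun x => ‖fderiv ℝ v x (Pi.single i 1)‖ₑ ^ p i)
      (hvm.enorm.pow_const _).aemeasurable ((hgm i).enorm.pow_const _).aemeasurable
      (ha0 i) (by positivity : 0 ≤ 1 / p i) (by simp [a])
    simp only [← ENNReal.rpow_mul, mul_one_div_cancel hpi.ne', ENNReal.rpow_one] at h
    calc _ ≤ A ^ (-a i) * (A ^ a i * (∫⁻ x, ‖fderiv ℝ v x (Pi.single i 1)‖ₑ ^ p i) ^ (1 / p i)) :=
          mul_le_mul_right h _
      _ = _ := by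
        rw [← mul_assoc, ← ENNReal.rpow_add _ _ hA0 hAt]
        simp
  have hline : ∀ x i, A ^ (-a i) * ‖v x‖ₑ ^ (1 + q * a i) ≤
      K * ∫⁻ t, f (Function.update x i t) := by
    intro x i
    have hw : ContDiff ℝ 1 (v ∘ Function.update x i) := hv.comp (contDiff_update 1 x i)
    have hwc : HasCompactSupport (v ∘ Function.update x i) :=
      hc.comp_isClosedEmbedding (isClosedEmbedding_update x i)
    have h := troisi_line hw hwc (mul_nonneg hq.le (ha0 i)) (x i)
    have hd : ∀ t, deriv (v ∘ Function.update x i) t =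
        fderiv ℝ v (Function.update x i t) (Pi.single i 1) := fun t => by
      rw [fderiv_comp_deriv _ (hv.differentiable one_ne_zero).differentiableAt
          (hasDerivAt_update x i t).differentiableAt, deriv_update]
    simp only [hd, Function.comp_apply, Function.update_eq_self] at h
    have hAi : A ^ (-a i) ≠ ∞ := by
      simp [ENNReal.rpow_eq_top_iff, hA0, hAt]
    calc _ ≤ A ^ (-a i) * (ENNReal.ofReal (1 + q * a i) *
            ∫⁻ t, ‖v (Function.update x i t)‖ₑ ^ (q * a i) *
              ‖fderiv ℝ v (Function.update x i t) (Pi.single i 1)‖ₑ) := mul_le_mul_right h _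
      _ = ENNReal.ofReal (1 + q * a i) * ∫⁻ t, A ^ (-a i) *
            (‖v (Function.update x i t)‖ₑ ^ (q * a i) *
              ‖fderiv ℝ v (Function.update x i t) (Pi.single i 1)‖ₑ) := by
          rw [lintegral_const_mul' _ _ hAi]; ring
      _ ≤ _ := by
          refine mul_le_mul' (ENNReal.ofReal_le_ofReal ?_) (lintegral_mono fun t => ?_)
          · nlinarith [ha1 i]
          · exact Finset.single_le_sum (f := fun j => A ^ (-a j) *
              (‖v (Function.update x i t)‖ₑ ^ (q * a j) *
              ‖fderiv ℝ v (Function.update x i t) (Pi.single j 1)‖ₑ))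
              (fun _ _ => zero_le) (Finset.mem_univ i)
  set r : ℝ := 1 / ((n : ℝ) - 1) with hr
  have hr0 : 0 < r := by rw [hr]; apply one_div_pos.2; linarith
  have hrn : r * ((n : ℝ) - 1) = 1 := by rw [hr]; apply one_div_mul_cancel; linarith
  have hconj : Real.HolderConjugate (Fintype.card (Fin n) : ℝ) (n * r) := by
    rw [Fintype.card_fin, Real.holderConjugate_iff]
    refine ⟨by linarith, ?_⟩
    rw [hr]
    have : (n : ℝ) - 1 ≠ 0 := by linarith
    field_simp
    ring
  have hgrid := lintegral_prod_lintegral_pow_le (fun _ : Fin n => (volume : Measure ℝ)) hconj hfm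
  rw [Fintype.card_fin, ← hr] at hgrid
  have hsumA : ∑ i, a i = (n : ℝ) - 1 - n / q := hpq
  have hprod : ∀ x, A ^ (-(r * ∑ i, a i)) * ‖v x‖ₑ ^ q ≤
      K ^ (n * r) * ∏ i, (∫⁻ t, f (Function.update x i t)) ^ r := by
    intro x
    have h : ∏ i, (A ^ (-a i) * ‖v x‖ₑ ^ (1 + q * a i)) ^ r ≤
        ∏ i, (K * ∫⁻ t, f (Function.update x i t)) ^ r :=
      Finset.prod_le_prod' fun i _ => ENNReal.rpow_le_rpow (hline x i) hr0.le
    have hvp : ∏ i, ‖v x‖ₑ ^ ((1 + q * a i) * r) = ‖v x‖ₑ ^ q := by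
      have hs : ∀ s : Finset (Fin n), ∏ i ∈ s, ‖v x‖ₑ ^ ((1 + q * a i) * r) =
          ‖v x‖ₑ ^ (∑ i ∈ s, (1 + q * a i) * r) := by
        have h0 : ∀ i, 0 ≤ (1 + q * a i) * r := fun i => by
          have := ha0 i
          positivity
        intro s
        induction s using Finset.induction_on with
        | empty => simp
        | insert i s hi ih =>
          rw [Finset.prod_insert hi, Finset.sum_insert hi, ih,
            ENNReal.rpow_add_of_nonneg _ _ (h0 i) (Finset.sum_nonneg fun i _ => h0 i)]
      rw [hs]
      · congr 1
        rw [← Finset.sum_mul, Finset.sum_add_distrib, ← Finset.mul_sum, hsumA]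
        simp only [Finset.sum_const, Finset.card_univ, Fintype.card_fin, nsmul_eq_mul, mul_one]
        have : (n : ℝ) + q * (n - 1 - n / q) = q * (n - 1) := by field_simp; ring
        rw [this, mul_assoc, mul_comm _ r, hrn, mul_one]
    have hAp : ∏ i, A ^ (-a i * r) = A ^ (-(r * ∑ i, a i)) := by
      have : ∀ s : Finset (Fin n), ∏ i ∈ s, A ^ (-a i * r) = A ^ (∑ i ∈ s, (-a i * r)) := by
        intro s
        induction s using Finset.induction_on with
        | empty => simp
        | insert i s hi ih =>
          rw [Finset.prod_insert hi, Finset.sum_insert hi, ih, ENNReal.rpow_add _ _ hA0 hAt]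
      rw [this, ← Finset.sum_mul, Finset.sum_neg_distrib]
      congr 1
      ring
    simp only [ENNReal.mul_rpow_of_nonneg _ _ hr0.le, Finset.prod_mul_distrib, ← ENNReal.rpow_mul,
      hvp, hAp, Finset.prod_const, Finset.card_univ, Fintype.card_fin] at h
    rw [← ENNReal.rpow_natCast, ← ENNReal.rpow_mul, mul_comm r (n : ℝ)] at h
    exact h
  have hAc : A ^ (-(r * ∑ i, a i)) ≠ ∞ := by
    simp [ENNReal.rpow_eq_top_iff, hA0, hAt]
  have hfin : A ^ (-(r * ∑ i, a i)) * A ≤ K ^ (n * r) * S ^ (n * r) := by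
    calc A ^ (-(r * ∑ i, a i)) * A = ∫⁻ x, A ^ (-(r * ∑ i, a i)) * ‖v x‖ₑ ^ q := by
          rw [lintegral_const_mul' _ _ hAc]
      _ ≤ ∫⁻ x, K ^ (n * r) * ∏ i, (∫⁻ t, f (Function.update x i t)) ^ r := lintegral_mono hprod
      _ = K ^ (n * r) * ∫⁻ x, ∏ i, (∫⁻ t, f (Function.update x i t)) ^ r := by
          rw [lintegral_const_mul']
          exact ENNReal.rpow_ne_top_of_nonneg (by positivity) ENNReal.ofReal_ne_top
      _ ≤ K ^ (n * r) * (∫⁻ x, f x) ^ (n * r) := mul_le_mul_right hgrid _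
      _ ≤ _ := mul_le_mul_right (ENNReal.rpow_le_rpow hfS (by positivity)) _
  have hnr : 0 < n * r := by positivity
  rw [← ENNReal.mul_rpow_of_nonneg _ _ hnr.le] at hfin
  have e : A ^ (-(r * ∑ i, a i)) * A = (A ^ (1 / q)) ^ (n * r) := by
    nth_rewrite 2 [← ENNReal.rpow_one A]
    rw [← ENNReal.rpow_add _ _ hA0 hAt, ← ENNReal.rpow_mul]
    congr 1
    rw [hsumA]
    have : -(r * ((n : ℝ) - 1 - n / q)) + 1 = -(r * (n - 1)) + 1 + 1 / q * (n * r) := by ring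
    rw [this, hrn]
    ring
  rw [e] at hfin
  exact (ENNReal.rpow_le_rpow_iff hnr).1 hfin

lemma troisi_conv {n : ℕ} {E : Set (EuclideanSpace ℝ (Fin n))}
    {g : EuclideanSpace ℝ (Fin n) → ℝ} (hg : Continuous g) (hc : HasCompactSupport g)
    (hE : tsupport g ⊆ E) {s : ℝ} (hs : 0 < s) :
    (∫⁻ x : Fin n → ℝ, ‖g (WithLp.toLp 2 x)‖ₑ ^ s) = ENNReal.ofReal (∫ x in E, |g x| ^ s) := by
  have h0 : ∀ x, x ∉ E → |g x| ^ s = 0 := fun x hx => by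
    have : g x = 0 := image_eq_zero_of_notMem_tsupport fun h => hx (hE h)
    simp [this, Real.zero_rpow hs.ne']
  have hcont : Continuous fun x => |g x| ^ s := hg.abs.rpow_const fun _ => Or.inr hs.le
  have hcs : HasCompactSupport fun x => |g x| ^ s :=
    hc.comp_left (g := fun y : ℝ => |y| ^ s) (by simp [Real.zero_rpow hs.ne'])
  rw [setIntegral_eq_integral_of_forall_compl_eq_zero h0,
    ofReal_integral_eq_lintegral_ofReal (hcont.integrable_of_hasCompactSupport hcs)
      (Filter.Eventually.of_forall fun x => by positivity),
    ← (PiLp.volume_preserving_toLp (Fin n)).lintegral_comp hcont.measurable.ennreal_ofReal]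
  refine lintegral_congr fun x => ?_
  rw [← ENNReal.ofReal_rpow_of_nonneg (abs_nonneg _) hs.le, ← Real.enorm_eq_ofReal_abs]

/-- Sobolev–Troisi inequality, case `p̄ < n`: for `u ∈ C_c^∞(E)`,
`‖u‖_{L^{p̄*}(E)} ≤ γ Σᵢ ‖∂ᵢu‖_{L^{pᵢ}(E)}` with `γ = γ(n, p₁, …, pₙ)`. -/
theorem sobolev_troisi_subcritical (n : ℕ) (hn : 1 ≤ n) (p : Fin n → ℝ)
    (hp : ∀ i, 1 ≤ p i) (pbar pstar : ℝ)
    (hpbar : 1 / pbar = (1 / n) * ∑ i, 1 / p i)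
    (hpstar : pstar = n * pbar / (n - pbar)) (hpn : pbar < n) :
    ∃ γ > (0 : ℝ),
      ∀ E : Set (EuclideanSpace ℝ (Fin n)), IsOpen E → Bornology.IsBounded E →
      ∀ u : EuclideanSpace ℝ (Fin n) → ℝ,
        ContDiff ℝ (⊤ : ℕ∞) u → HasCompactSupport u → tsupport u ⊆ E →
        (∫ x in E, |u x| ^ pstar) ^ (1 / pstar) ≤
          γ * ∑ i, (∫ x in E, |fderiv ℝ u x (EuclideanSpace.single i 1)| ^ p i) ^ (1 / p i) := by
  have hn0 : (0 : ℝ) < n := by exact_mod_cast hn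
  have hsum0 : 0 < ∑ i, 1 / p i := by
    have : Nonempty (Fin n) := ⟨⟨0, hn⟩⟩
    exact Finset.sum_pos (fun i _ => by have := hp i; positivity) Finset.univ_nonempty
  have hsum1 : ∑ i, 1 / p i ≤ n := by
    calc ∑ i, 1 / p i ≤ ∑ _i : Fin n, (1 : ℝ) := Finset.sum_le_sum fun i _ => by
          rw [div_le_one (by linarith [hp i])]; exact hp i
      _ = n := by simp
  have hpb0 : 0 < pbar := by
    apply one_div_pos.1; rw [hpbar]; positivity
  have hpb1 : 1 ≤ pbar := by
    have : 1 / pbar ≤ 1 := by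
      rw [hpbar, one_div_mul_eq_div, div_le_one hn0]; exact hsum1
    rwa [div_le_one hpb0] at this
  have hn2 : 2 ≤ n := by
    have : (1 : ℝ) < n := by linarith
    exact_mod_cast this
  have hq : 0 < pstar := by
    rw [hpstar]; apply div_pos (by positivity); linarith
  have hpq : ∑ i, (1 - 1 / p i) = (n : ℝ) - 1 - n / pstar := by
    have h1 : ∑ i, 1 / p i = n / pbar := by
      rw [div_eq_mul_one_div, hpbar]; field_simp
    rw [Finset.sum_sub_distrib, h1, hpstar]
    have : (n : ℝ) - pbar ≠ 0 := by linarith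
    simp only [Finset.sum_const, Finset.card_univ, Fintype.card_fin, nsmul_eq_mul, mul_one]
    field_simp
    ring
  refine ⟨1 + pstar, by linarith, fun E _ _ u hu hc hE => ?_⟩
  have hu1 : ContDiff ℝ 1 u := hu.of_le (by exact_mod_cast le_top)
  let L := (EuclideanSpace.equiv (Fin n) ℝ).symm
  have hgc : ∀ i, Continuous fun x => fderiv ℝ u x (EuclideanSpace.single i 1) := fun i =>
    (hu1.continuous_fderiv one_ne_zero).clm_apply continuous_const
  have hgs : ∀ i, HasCompactSupport fun x => fderiv ℝ u x (EuclideanSpace.single i 1) := fun i =>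
    hc.fderiv_apply ℝ _
  have hgE : ∀ i, tsupport (fun x => fderiv ℝ u x (EuclideanSpace.single i 1)) ⊆ E := fun i =>
    (tsupport_fderiv_apply_subset ℝ _).trans hE
  set A := ∫ x in E, |u x| ^ pstar with hA
  have hA0 : 0 ≤ A := integral_nonneg fun x => by positivity
  have hG0 : ∀ i, 0 ≤ ∫ x in E, |fderiv ℝ u x (EuclideanSpace.single i 1)| ^ p i := fun i =>
    integral_nonneg fun x => by positivity
  have hR : 0 ≤ ∑ i, (∫ x in E, |fderiv ℝ u x (EuclideanSpace.single i 1)| ^ p i) ^ (1 / p i) :=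
    Finset.sum_nonneg fun i _ => Real.rpow_nonneg (hG0 i) _
  rcases hA0.eq_or_lt with h0 | h0
  · rw [← h0, Real.zero_rpow (by positivity)]
    positivity
  have hAe := troisi_conv hu1.continuous hc hE hq
  have hv : ContDiff ℝ 1 (u ∘ L) := hu1.comp L.contDiff
  have hvc : HasCompactSupport (u ∘ L) := hc.comp_homeomorph L.toHomeomorph
  have hcore := troisi_core hn2 p hp hq hpq hv hvc
    (by
      show (∫⁻ x : Fin n → ℝ, ‖u (WithLp.toLp 2 x)‖ₑ ^ pstar) ≠ 0
      rw [hAe]; simpa using h0)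
    (by
      show (∫⁻ x : Fin n → ℝ, ‖u (WithLp.toLp 2 x)‖ₑ ^ pstar) ≠ _
      rw [hAe]; simp)
  have hd : ∀ x i, fderiv ℝ (u ∘ L) x (Pi.single i 1) =
      fderiv ℝ u (WithLp.toLp 2 x) (EuclideanSpace.single i 1) := fun x i => by
    rw [fderiv_comp _ (hu1.differentiable one_ne_zero).differentiableAt
      L.differentiableAt]
    rw [ContinuousLinearEquiv.fderiv]
    rfl
  have hGe : ∀ i, (∫⁻ x : Fin n → ℝ, ‖fderiv ℝ (u ∘ L) x (Pi.single i 1)‖ₑ ^ p i) =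
      ENNReal.ofReal (∫ x in E, |fderiv ℝ u x (EuclideanSpace.single i 1)| ^ p i) := fun i => by
    simp only [hd]
    exact troisi_conv (hgc i) (hgs i) (hgE i) (by linarith [hp i])
  simp only [hGe] at hcore
  change (∫⁻ x : Fin n → ℝ, ‖u (WithLp.toLp 2 x)‖ₑ ^ pstar) ^ (1 / pstar) ≤ _ at hcore
  rw [hAe, ENNReal.ofReal_rpow_of_nonneg hA0 (by positivity)] at hcore
  have : ∀ i, (0 : ℝ) ≤ 1 / p i := fun i => by have := hp i; positivity
  simp only [ENNReal.ofReal_rpow_of_nonneg (hG0 _) (this _)] at hcore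
  rw [← ENNReal.ofReal_sum_of_nonneg fun i _ => Real.rpow_nonneg (hG0 i) _,
    ← ENNReal.ofReal_mul (by linarith)] at hcore
  exact (ENNReal.ofReal_le_ofReal_iff (by positivity)).1 hcore
end

section
/- (Sobolev–Troisi inequality, case p̄ = n.) Let E ⊂ ℝⁿ be a bounded open set, let p_i ≥ 1 for i = 1,…,n, set 1/p̄ = (1/n) Σ_{i=1}^n (1/p_i), and assume p̄ = n. Then for every 1 ≤ r < ∞ there exists a constant γ₁ > 0 depending only on n, r, p₁,…,pₙ (and E) such that for every u ∈ C_c^∞(E): ‖u‖_{L^r(E)} ≤ γ₁ [ Σ_{i=1}^n ‖∂_i u‖_{L^{p_i}(E)} + ‖u‖_{L^1(E)} ]. -/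
open MeasureTheory
open scoped ENNReal NNReal

lemma troisi_line_s6 {n : ℕ} {v : (Fin n → ℝ) → ℝ} (hv : ContDiff ℝ 1 v)
    (h2v : HasCompactSupport v) (i : Fin n) (x : Fin n → ℝ) :
    ‖v x‖ₑ ≤ ∫⁻ t, ‖fderiv ℝ v (Function.update x i t) (Pi.single i 1)‖ₑ := by
  calc ‖v x‖ₑ
    _ ≤ ∫⁻ t in Set.Iic (x i), ‖deriv (v ∘ Function.update x i) t‖ₑ := by
        apply le_trans (by simp) (HasCompactSupport.enorm_le_lintegral_Ici_deriv _ _ _)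
        · exact hv.comp (by convert! contDiff_update 1 x i)
        · exact h2v.comp_isClosedEmbedding (isClosedEmbedding_update x i)
    _ ≤ ∫⁻ t, ‖deriv (v ∘ Function.update x i) t‖ₑ := setLIntegral_le_lintegral _ _
    _ = _ := by
        congr! 3 with t
        rw [fderiv_comp_deriv _ (hv.differentiable one_ne_zero).differentiableAt
          (hasDerivAt_update x i t).differentiableAt, deriv_update]

lemma troisi_line_pow {n : ℕ} {v : (Fin n → ℝ) → ℝ} (hv : ContDiff ℝ 1 v)
    (h2v : HasCompactSupport v) (i : Fin n) (x : Fin n → ℝ) (s : ℝ) (hs : 1 < s) :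
    ‖v x‖ₑ ^ s ≤ ∫⁻ t, ENNReal.ofReal s * (‖v (Function.update x i t)‖ₑ ^ (s - 1) *
      ‖fderiv ℝ v (Function.update x i t) (Pi.single i 1)‖ₑ) := by
  have h := troisi_line_s6 (hv.norm_rpow hs) (v := fun x => ‖v x‖ ^ s)
    (h2v.comp_left (g := fun y => ‖y‖ ^ s) (by
      simp; rw [Real.zero_rpow (by linarith)])) i x
  have e1 : ‖(‖v x‖ ^ s : ℝ)‖ₑ = ‖v x‖ₑ ^ s := by
    rw [Real.enorm_rpow_of_nonneg (norm_nonneg _) (by linarith), enorm_norm]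
  rw [e1] at h
  refine h.trans (lintegral_mono fun t => ?_)
  dsimp only
  rw [(hv.differentiable one_ne_zero).fderiv_norm_rpow hs]
  set y := Function.update x i t
  have h3 : ‖v y‖ₑ ^ (s - 1) = ENNReal.ofReal (‖v y‖ ^ (s - 1)) := by
    rw [← ofReal_norm, ENNReal.ofReal_rpow_of_nonneg (norm_nonneg _) (by linarith)]
  rw [h3, ← ofReal_norm, ← ofReal_norm, ← ENNReal.ofReal_mul (by positivity),
    ← ENNReal.ofReal_mul (by positivity)]
  apply ENNReal.ofReal_le_ofReal
  apply le_of_eq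
  simp only [smul_apply, ContinuousLinearMap.comp_apply, smul_eq_mul,
    norm_mul, innerSL_apply_apply, RCLike.inner_apply, conj_trivial]
  rw [Real.norm_of_nonneg (by linarith : 0 ≤ s), Real.norm_of_nonneg (r := ‖v y‖ ^ (s-2)) (by positivity)]
  rcases eq_or_ne (v y) 0 with h0 | h0
  · simp [h0]; right; left; exact Real.zero_rpow (by linarith)
  · rw [show s - 1 = (s - 2) + 1 by ring, Real.rpow_add_one (norm_ne_zero_iff.mpr h0)]
    ring

lemma troisi_rpow_sum {ι : Type*} (a : ℝ≥0∞) (t : Finset ι) (s : ι → ℝ) (hs : ∀ i, 0 ≤ s i) :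
    a ^ (∑ i ∈ t, s i) = ∏ i ∈ t, a ^ s i := by
  classical
  induction t using Finset.induction_on with
  | empty => simp
  | insert i t hi ih =>
    rw [Finset.sum_insert hi, Finset.prod_insert hi,
      ENNReal.rpow_add_of_nonneg _ _ (hs i) (Finset.sum_nonneg fun i _ => hs i), ih]

lemma troisi_norm {n : ℕ} (hn : 2 ≤ n) (p : Fin n → ℝ) (hp : ∀ i, 1 < p i)
    (hsum : ∑ i, 1 / p i = 1) (r : ℝ) (hr : 1 ≤ r)
    {v : (Fin n → ℝ) → ℝ} (hv : ContDiff ℝ 1 v)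
    (h2v : HasCompactSupport v) (h1 : ∫⁻ x, ‖v x‖ₑ ^ r = 1) :
    ∫⁻ x, ‖v x‖ₑ ^ (r + n / (n - 1) : ℝ) ≤
      (ENNReal.ofReal (1 + r) *
        ∑ i, (∫⁻ x, ‖fderiv ℝ v x (Pi.single i 1)‖ₑ ^ p i) ^ (1 / p i)) ^ (n / (n - 1) : ℝ) := by
  have hn' : (2:ℝ) ≤ n := by exact_mod_cast hn
  have hn1 : (0:ℝ) < n - 1 := by linarith
  set s : Fin n → ℝ := fun i => 1 + r * (1 - 1 / p i) with hs
  have hpi : ∀ i, 0 < 1 / p i ∧ 1 / p i < 1 := fun i =>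
    ⟨by have := hp i; positivity, by rw [div_lt_one (by linarith [hp i])]; exact hp i⟩
  have hs1 : ∀ i, 1 < s i := fun i => by
    have := hpi i
    simp only [hs]; nlinarith
  have hs2 : ∀ i, s i ≤ 1 + r := fun i => by
    have := hpi i
    simp only [hs]; nlinarith
  have hss : ∑ i, s i = n + r * (n - 1) := by
    simp only [hs, Finset.sum_add_distrib, ← Finset.mul_sum, Finset.sum_sub_distrib, hsum]
    simp
  set f : (Fin n → ℝ) → ℝ≥0∞ := fun x => ∑ i, ENNReal.ofReal (s i) * (‖v x‖ₑ ^ (s i - 1) *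
      ‖fderiv ℝ v x (Pi.single i 1)‖ₑ) with hf
  have hcv : Continuous v := hv.continuous
  have hcd : ∀ i, Continuous fun x => fderiv ℝ v x (Pi.single i 1) := fun i =>
    (hv.continuous_fderiv one_ne_zero).clm_apply continuous_const
  have hm1 : ∀ i, Measurable fun x => ‖v x‖ₑ ^ (s i - 1) := fun i =>
    hcv.measurable.enorm.pow_const _
  have hm2 : ∀ i, Measurable fun x => ‖fderiv ℝ v x (Pi.single i 1)‖ₑ := fun i =>
    (hcd i).measurable.enorm
  have hfm : Measurable f := by
    refine Finset.measurable_fun_sum _ fun i _ => ?_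
    exact ((hm1 i).mul (hm2 i)).const_mul _
  have hconj : Real.HolderConjugate (Fintype.card (Fin n)) (n / (n - 1) : ℝ) := by
    rw [Fintype.card_fin, Real.holderConjugate_iff]
    refine ⟨by linarith, ?_⟩
    field_simp; ring
  have key := lintegral_prod_lintegral_pow_le (fun _ : Fin n => (volume : Measure ℝ)) hconj hfm
  rw [← volume_pi, Fintype.card_fin] at key
  have hint : ∫⁻ x, f x ≤ ENNReal.ofReal (1 + r) *
        ∑ i, (∫⁻ x, ‖fderiv ℝ v x (Pi.single i 1)‖ₑ ^ p i) ^ (1 / p i) := by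
    have hm3 : ∀ i ∈ Finset.univ, Measurable fun x => ENNReal.ofReal (s i) *
        (‖v x‖ₑ ^ (s i - 1) * ‖fderiv ℝ v x (Pi.single i 1)‖ₑ) :=
      fun i _ => ((hm1 i).mul (hm2 i)).const_mul _
    rw [hf, lintegral_finsetSum _ hm3, Finset.mul_sum]
    refine Finset.sum_le_sum fun i _ => ?_
    have hm4 : Measurable fun x => ‖v x‖ₑ ^ (s i - 1) * ‖fderiv ℝ v x (Pi.single i 1)‖ₑ :=
      (hm1 i).mul (hm2 i)
    rw [lintegral_const_mul _ hm4]
    gcongr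
    · exact hs2 i
    have hc : (p i / (p i - 1)).HolderConjugate (p i) :=
      (Real.HolderConjugate.conjExponent (hp i)).symm
    have := ENNReal.lintegral_mul_le_Lp_mul_Lq volume hc (hm1 i).aemeasurable (hm2 i).aemeasurable
    refine this.trans (le_of_eq ?_)
    have e : ∀ x, (‖v x‖ₑ ^ (s i - 1)) ^ (p i / (p i - 1)) = ‖v x‖ₑ ^ r := fun x => by
      rw [← ENNReal.rpow_mul]
      congr 1
      have := hp i
      have : p i - 1 ≠ 0 := by linarith
      simp only [hs]; field_simp; ring
    simp_rw [e, h1]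
    simp
  refine le_trans (le_trans (lintegral_mono fun x => ?_) key) (by gcongr)
  calc ‖v x‖ₑ ^ (r + n / (n - 1) : ℝ) = ∏ i, (‖v x‖ₑ ^ (s i)) ^ (1 / (n - 1) : ℝ) := by
        rw [ENNReal.prod_rpow_of_nonneg (by positivity),
          ← troisi_rpow_sum _ _ _ (fun i => by have := hs1 i; linarith), hss, ← ENNReal.rpow_mul]
        congr 1
        field_simp; ring
    _ ≤ _ := by
        refine Finset.prod_le_prod' fun i _ => ?_
        gcongr
        refine (troisi_line_pow hv h2v i x (s i) (hs1 i)).trans (lintegral_mono fun t => ?_)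
        exact Finset.single_le_sum (f := fun i => ENNReal.ofReal (s i) *
          (‖v (Function.update x _ t)‖ₑ ^ (s i - 1) *
          ‖fderiv ℝ v (Function.update x _ t) (Pi.single i 1)‖ₑ)) (fun _ _ => zero_le) (Finset.mem_univ i)


lemma troisi_restrict {α : Type*} [MeasurableSpace α] {μ : Measure α} (g : α → ℝ) (K : Set α)
    (_hK : MeasurableSet K) (h : ∀ x, x ∉ K → g x = 0) (q : ℝ) (hq : 0 < q) :
    eLpNorm' g q (μ.restrict K) = eLpNorm' g q μ := by
  unfold eLpNorm'
  congr 1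
  apply setLIntegral_eq_of_support_subset
  intro x hx
  by_contra hxK
  exact hx (by simp [h x hxK, hq])

lemma troisi_pi_two {n : ℕ} (hn : 2 ≤ n) (p : Fin n → ℝ) (hp : ∀ i, 1 < p i)
    (hsum : ∑ i, 1 / p i = 1) (r : ℝ) (hr : 1 ≤ r) (K : Set (Fin n → ℝ)) (hK : MeasurableSet K)
    (hKf : volume K ≠ ∞) :
    ∃ C : ℝ≥0∞, C ≠ ∞ ∧ ∀ v : (Fin n → ℝ) → ℝ, ContDiff ℝ 1 v → HasCompactSupport v →
      (∀ x, x ∉ K → v x = 0) →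
      eLpNorm' v r volume ≤
        C * ∑ i, eLpNorm' (fun x => fderiv ℝ v x (Pi.single i 1)) (p i) volume := by
  have hn' : (2:ℝ) ≤ n := by exact_mod_cast hn
  have hn1 : (0:ℝ) < n - 1 := by linarith
  set m : ℝ := n / (n - 1) with hm
  have hm0 : 0 < m := by positivity
  set Q : ℝ := r + m with hQ
  have hQ0 : 0 < Q := by positivity
  have he : 0 ≤ 1 / r - 1 / Q := by
    rw [sub_nonneg]; exact one_div_le_one_div_of_le (by linarith) (by linarith)
  refine ⟨ENNReal.ofReal (1 + r) * (volume K ^ (1 / r - 1 / Q)) ^ (Q / m), ?_, ?_⟩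
  · apply ENNReal.mul_ne_top ENNReal.ofReal_ne_top
    exact ENNReal.rpow_ne_top_of_nonneg (by positivity) (ENNReal.rpow_ne_top_of_nonneg he hKf)
  set C := ENNReal.ofReal (1 + r) * (volume K ^ (1 / r - 1 / Q)) ^ (Q / m)
  have main : ∀ v : (Fin n → ℝ) → ℝ, ContDiff ℝ 1 v → HasCompactSupport v →
      (∀ x, x ∉ K → v x = 0) → eLpNorm' v r volume = 1 →
      1 ≤ C * ∑ i, eLpNorm' (fun x => fderiv ℝ v x (Pi.single i 1)) (p i) volume := by
    intro v hv h2v h0 h1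
    have h1' : ∫⁻ x, ‖v x‖ₑ ^ r = 1 := by
      have := congrArg (· ^ r) h1
      simp only [eLpNorm', ← ENNReal.rpow_mul, ENNReal.one_rpow] at this
      rwa [one_div_mul_cancel (by linarith), ENNReal.rpow_one] at this
    have A := troisi_norm hn p hp hsum r hr hv h2v h1'
    have B := eLpNorm'_le_eLpNorm'_mul_rpow_measure_univ (μ := volume.restrict K) (f := v)
      (p := r) (q := Q) (by linarith) (by linarith) hv.continuous.aestronglyMeasurable
    rw [troisi_restrict v K hK h0 r (by linarith), troisi_restrict v K hK h0 Q hQ0, h1,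
      Measure.restrict_apply_univ] at B
    set X := ∑ i, eLpNorm' (fun x => fderiv ℝ v x (Pi.single i 1)) (p i) volume with hX
    have A' : eLpNorm' v Q volume ≤ ((ENNReal.ofReal (1 + r) * X) ^ m) ^ (1 / Q) := by
      unfold eLpNorm'
      gcongr
      exact A
    have B' := B.trans (mul_le_mul_left A' _)
    have B2 := ENNReal.rpow_le_rpow B' (by positivity : 0 ≤ Q / m)
    rw [ENNReal.one_rpow, ENNReal.mul_rpow_of_nonneg _ _ (by positivity : 0 ≤ Q / m),
      ← ENNReal.rpow_mul, ← ENNReal.rpow_mul,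
      show m * (1 / Q * (Q / m)) = 1 by field_simp, ENNReal.rpow_one] at B2
    refine B2.trans (le_of_eq ?_)
    simp only [C]
    ring
  intro v hv h2v h0
  have hfin : eLpNorm' v r volume ≠ ∞ := by
    have := (hv.continuous.memLp_of_hasCompactSupport (p := ENNReal.ofReal r) (μ := volume) h2v).2
    rw [eLpNorm_eq_eLpNorm' (by simp; linarith) (by simp), ENNReal.toReal_ofReal (by linarith)] at this
    exact this.ne
  by_cases hz : eLpNorm' v r volume = 0
  · simp [hz]
  set N := (eLpNorm' v r volume).toReal with hN
  have hNpos : 0 < N := ENNReal.toReal_pos hz hfin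
  have hNe : ‖N⁻¹‖ₑ = (eLpNorm' v r volume)⁻¹ := by
    rw [enorm_inv hNpos.ne', ← ofReal_norm, Real.norm_of_nonneg hNpos.le, ENNReal.ofReal_toReal hfin]
  have M := main (N⁻¹ • v) (contDiff_const.smul hv) (h2v.smul_left (f := fun _ => N⁻¹)) (fun x hx => by simp [h0 x hx])
    (by rw [eLpNorm'_const_smul _ (by linarith), hNe, ENNReal.inv_mul_cancel hz hfin])
  have e : ∀ i, eLpNorm' (fun x => fderiv ℝ (N⁻¹ • v) x (Pi.single i 1)) (p i) volume =
      (eLpNorm' v r volume)⁻¹ * eLpNorm' (fun x => fderiv ℝ v x (Pi.single i 1)) (p i) volume := by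
    intro i
    rw [← hNe, ← eLpNorm'_const_smul _ (by linarith [hp i])]
    congr 1
    ext x
    rw [fderiv_const_smul (hv.differentiable one_ne_zero x)]
    simp
  simp_rw [e, ← Finset.mul_sum] at M
  calc eLpNorm' v r volume = eLpNorm' v r volume * 1 := by simp
    _ ≤ _ := mul_le_mul_right M _
    _ = (eLpNorm' v r volume * (eLpNorm' v r volume)⁻¹) * (C * ∑ i, eLpNorm' (fun x => fderiv ℝ v x (Pi.single i 1)) (p i) volume) := by ring
    _ = _ := by rw [ENNReal.mul_inv_cancel hz hfin, one_mul]

lemma troisi_pi_one (p : Fin 1 → ℝ) (hp : p 0 = 1) (r : ℝ) (hr : 1 ≤ r)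
    (K : Set (Fin 1 → ℝ)) (hK : MeasurableSet K) (hKf : volume K ≠ ∞) :
    ∃ C : ℝ≥0∞, C ≠ ∞ ∧ ∀ v : (Fin 1 → ℝ) → ℝ, ContDiff ℝ 1 v → HasCompactSupport v →
      (∀ x, x ∉ K → v x = 0) →
      eLpNorm' v r volume ≤
        C * ∑ i, eLpNorm' (fun x => fderiv ℝ v x (Pi.single i 1)) (p i) volume := by
  refine ⟨volume K ^ (1 / r), ENNReal.rpow_ne_top_of_nonneg (by positivity) hKf, ?_⟩
  intro v hv h2v h0
  rw [← troisi_restrict v K hK h0 r (by linarith)]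
  simp only [Finset.univ_unique, Fin.default_eq_zero, Finset.sum_singleton]
  rw [hp]
  set X := eLpNorm' (fun x => fderiv ℝ v x (Pi.single 0 1)) 1 volume with hX
  have hb : ∀ x, ‖v x‖ₑ ≤ X := by
    intro x
    refine (troisi_line_s6 hv h2v 0 x).trans (le_of_eq ?_)
    have h1 := congrFun (lmarginal_singleton (μ := fun _ : Fin 1 => (volume : Measure ℝ))
      (fun x => ‖fderiv ℝ v x (Pi.single 0 1)‖ₑ) 0) x
    have h2 := congrFun (lmarginal_univ (μ := fun _ : Fin 1 => (volume : Measure ℝ))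
      (f := fun x => ‖fderiv ℝ v x (Pi.single 0 1)‖ₑ)) x
    rw [← h1, hX]
    simp only [eLpNorm', ENNReal.rpow_one, div_one]
    rw [volume_pi, ← h2]
    rfl
  unfold eLpNorm'
  calc (∫⁻ x in K, ‖v x‖ₑ ^ r) ^ (1 / r) ≤ (∫⁻ x in K, X ^ r) ^ (1 / r) := by
        gcongr with x; exact hb x
    _ = _ := by
        rw [setLIntegral_const, ENNReal.mul_rpow_of_nonneg _ _ (by positivity), ← ENNReal.rpow_mul,
          mul_one_div_cancel (by linarith), ENNReal.rpow_one, mul_comm]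

lemma troisi_conv_s6 {n : ℕ} (E : Set (EuclideanSpace ℝ (Fin n))) (hE : MeasurableSet E)
    (g : EuclideanSpace ℝ (Fin n) → ℝ) (hg : Continuous g) (h2g : HasCompactSupport g)
    (h0 : ∀ x, x ∉ E → g x = 0) (q : ℝ) (hq : 1 ≤ q) :
    (∫ x in E, |g x| ^ q) ^ (1 / q) =
      (eLpNorm' (fun y : Fin n → ℝ => g (WithLp.toLp 2 y)) q volume).toReal ∧
    eLpNorm' (fun y : Fin n → ℝ => g (WithLp.toLp 2 y)) q volume ≠ ∞ := by
  have hmp := PiLp.volume_preserving_toLp (Fin n)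
  have e1 : eLpNorm' (fun y : Fin n → ℝ => g (WithLp.toLp 2 y)) q volume = eLpNorm' g q volume := by
    unfold eLpNorm'
    rw [← hmp.lintegral_comp (hg.measurable.enorm.pow_const q)]
  have hfin : eLpNorm' g q volume ≠ ∞ := by
    have := (hg.memLp_of_hasCompactSupport (p := ENNReal.ofReal q) (μ := volume) h2g).2
    rw [eLpNorm_eq_eLpNorm' (by simp; linarith) (by simp), ENNReal.toReal_ofReal (by linarith)] at this
    exact this.ne
  rw [e1]
  refine ⟨?_, hfin⟩
  rw [← troisi_restrict g E hE h0 q (by linarith)]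
  unfold eLpNorm'
  rw [← ENNReal.toReal_rpow, integral_eq_lintegral_of_nonneg_ae
    (Filter.Eventually.of_forall fun x => by positivity)
    ((hg.abs.rpow_const fun x => Or.inr (by linarith)).aestronglyMeasurable)]
  congr! 4 with x
  rw [← ENNReal.ofReal_rpow_of_nonneg (abs_nonneg _) (by linarith), ← Real.norm_eq_abs, ofReal_norm]

theorem sobolev_troisi_critical (n : ℕ) (hn : 1 ≤ n) (p : Fin n → ℝ)
    (hp : ∀ i, 1 ≤ p i) (pbar : ℝ)
    (hpbar : 1 / pbar = (1 / n) * ∑ i, 1 / p i) (hpn : pbar = n)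
    (E : Set (EuclideanSpace ℝ (Fin n))) (hEo : IsOpen E) (hEb : Bornology.IsBounded E)
    (r : ℝ) (hr : 1 ≤ r) :
    ∃ γ₁ > (0 : ℝ),
      ∀ u : EuclideanSpace ℝ (Fin n) → ℝ,
        ContDiff ℝ (⊤ : ℕ∞) u → HasCompactSupport u → tsupport u ⊆ E →
        (∫ x in E, |u x| ^ r) ^ (1 / r) ≤
          γ₁ * ((∑ i, (∫ x in E, |fderiv ℝ u x (EuclideanSpace.single i 1)| ^ p i) ^ (1 / p i))
            + ∫ x in E, |u x|) := by
  have hn0 : (0:ℝ) < n := by exact_mod_cast hn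
  have hsum : ∑ i, 1 / p i = 1 := by
    rw [hpn] at hpbar
    field_simp at hpbar
    simpa using hpbar.symm
  have hmp := PiLp.volume_preserving_toLp (Fin n)
  set K : Set (Fin n → ℝ) := (WithLp.toLp 2) ⁻¹' E with hKdef
  have hK : MeasurableSet K := hmp.measurable hEo.measurableSet
  have hKf : volume K ≠ ∞ := by
    rw [hmp.measure_preimage hEo.measurableSet.nullMeasurableSet]
    exact hEb.measure_lt_top.ne
  obtain ⟨C, hC, H⟩ : ∃ C : ℝ≥0∞, C ≠ ∞ ∧ ∀ v : (Fin n → ℝ) → ℝ, ContDiff ℝ 1 v →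
      HasCompactSupport v → (∀ x, x ∉ K → v x = 0) →
      eLpNorm' v r volume ≤
        C * ∑ i, eLpNorm' (fun x => fderiv ℝ v x (Pi.single i 1)) (p i) volume := by
    rcases Nat.lt_or_ge 1 n with h2 | h2
    · refine troisi_pi_two h2 p (fun i => ?_) hsum r hr K hK hKf
      refine lt_of_le_of_ne (hp i) fun h => ?_
      have : Nontrivial (Fin n) := Fin.nontrivial_iff_two_le.mpr h2
      obtain ⟨j, hj⟩ := exists_ne i
      have hle : ∑ k ∈ {i, j}, 1 / p k ≤ ∑ k, 1 / p k :=
        Finset.sum_le_sum_of_subset_of_nonneg (Finset.subset_univ _)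
          fun k _ _ => by have := hp k; positivity
      rw [Finset.sum_pair hj.symm, hsum, ← h] at hle
      have : 0 < 1 / p j := by have := hp j; positivity
      linarith
    · obtain rfl : n = 1 := by omega
      refine troisi_pi_one p ?_ r hr K hK hKf
      simp at hsum
      exact hsum
  refine ⟨C.toReal + 1, by positivity, fun u hu h2u hsu => ?_⟩
  have hu1 : ContDiff ℝ 1 u := hu.of_le (by simp)
  have hu0 : ∀ x, x ∉ E → u x = 0 := fun x hx => image_eq_zero_of_notMem_tsupport fun h => hx (hsu h)
  have hcd : ∀ i, Continuous fun x => fderiv ℝ u x (EuclideanSpace.single i 1) := fun i =>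
    (hu1.continuous_fderiv one_ne_zero).clm_apply continuous_const
  have hds : ∀ i, HasCompactSupport fun x => fderiv ℝ u x (EuclideanSpace.single i 1) := fun i =>
    h2u.fderiv_apply (𝕜 := ℝ) _
  have hd0 : ∀ i x, x ∉ E → fderiv ℝ u x (EuclideanSpace.single i 1) = 0 := fun i x hx => by
    have : x ∉ tsupport (fderiv ℝ u) := fun h => hx (hsu (tsupport_fderiv_subset ℝ h))
    rw [image_eq_zero_of_notMem_tsupport this]; rfl
  obtain ⟨a1, a2⟩ := troisi_conv_s6 E hEo.measurableSet u hu1.continuous h2u hu0 r hr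
  have hD := fun i => troisi_conv_s6 E hEo.measurableSet _ (hcd i) (hds i) (hd0 i) (p i) (hp i)
  set L : (Fin n → ℝ) ≃L[ℝ] EuclideanSpace ℝ (Fin n) :=
    (PiLp.continuousLinearEquiv 2 ℝ (fun _ : Fin n => ℝ)).symm with hL
  have hLe : ∀ y, L y = WithLp.toLp 2 y := fun y => rfl
  have hfd : ∀ i y, fderiv ℝ (fun y : Fin n → ℝ => u (WithLp.toLp 2 y)) y (Pi.single i 1) =
      fderiv ℝ u (WithLp.toLp 2 y) (EuclideanSpace.single i 1) := by
    intro i y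
    have : HasFDerivAt (fun y : Fin n → ℝ => u (WithLp.toLp 2 y))
        ((fderiv ℝ u (L y)).comp (L : (Fin n → ℝ) →L[ℝ] EuclideanSpace ℝ (Fin n))) y :=
      ((hu1.differentiable one_ne_zero (L y)).hasFDerivAt).comp y L.hasFDerivAt
    rw [this.fderiv]
    rfl
  have HH := H (fun y => u (WithLp.toLp 2 y)) (hu1.comp L.contDiff)
    (h2u.comp_homeomorph L.toHomeomorph) (fun x hx => hu0 _ hx)
  simp_rw [hfd] at HH
  have hnn : 0 ≤ ∫ x in E, |u x| := integral_nonneg fun x => abs_nonneg _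
  rw [a1, Finset.sum_congr rfl fun i _ => (hD i).1, ← ENNReal.toReal_sum fun i _ => (hD i).2]
  have hT : ∑ i, eLpNorm' (fun y : Fin n → ℝ => fderiv ℝ u (WithLp.toLp 2 y)
      (EuclideanSpace.single i 1)) (p i) volume ≠ ∞ := ENNReal.sum_ne_top.mpr fun i _ => (hD i).2
  have R := ENNReal.toReal_mono (ENNReal.mul_ne_top hC hT) HH
  rw [ENNReal.toReal_mul] at R
  have c0 : 0 ≤ C.toReal := ENNReal.toReal_nonneg
  refine R.trans ?_
  apply mul_le_mul (by linarith) (by linarith) ENNReal.toReal_nonneg (by linarith)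
end

section
/- (Sobolev–Troisi inequality, case p̄ > n.) Let E ⊂ ℝⁿ be a bounded open set, let p_i ≥ 1 for i = 1,…,n, set 1/p̄ = (1/n) Σ_{i=1}^n (1/p_i), and assume p̄ > n. Then there exists a constant γ₂ > 0 depending only on n, p₁,…,pₙ (and E) such that for every u ∈ C_c^∞(E): ‖u‖_{L^∞(E)} ≤ γ₂ [ Σ_{i=1}^n ‖∂_i u‖_{L^{p_i}(E)} + ‖u‖_{L^1(E)} ]. -/
open MeasureTheory

lemma st_pointwise {n : ℕ} (a : Fin n → ℝ) (ha0 : ∀ i, 0 < a i) (ha1 : ∀ i, a i ≤ 1)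
    (v : (Fin n → ℝ) → ℝ) (hv : ContDiff ℝ 1 v) (x z : Fin n → ℝ)
    (hz : z ∈ Set.Icc (0 : Fin n → ℝ) 1) :
    ‖v x‖ₑ ≤ ‖v (fun j => x j + z j)‖ₑ + ∑ i, ∫⁻ t in Set.Ioo (0:ℝ) 1,
      ENNReal.ofReal (t ^ (a i - 1)) *
        ‖fderiv ℝ v (fun j => x j + t ^ a j * z j) (Pi.single i 1)‖ₑ := by
  have hg : ∀ i, Continuous fun y => fderiv ℝ v y (Pi.single i 1) := fun i =>
    (hv.continuous_fderiv (by simp)).clm_apply continuous_const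
  set w : ℝ → (Fin n → ℝ) := fun t j => x j + t ^ a j * z j with hw
  have hwm : Measurable w := by
    rw [measurable_pi_iff]; intro j; simp only [hw]; fun_prop
  set f' : ℝ → ℝ := fun t => ∑ i, (a i * t ^ (a i - 1) * z i) *
    fderiv ℝ v (w t) (Pi.single i 1) with hf'
  have hf'm : Measurable f' := by
    apply Finset.measurable_sum
    intro i _
    exact (by fun_prop : Measurable fun t : ℝ => a i * t ^ (a i - 1) * z i).mul
      ((hg i).measurable.comp hwm)
  have hbound : ∫⁻ t in Set.Ioo (0:ℝ) 1, ‖f' t‖ₑ ≤ ∑ i, ∫⁻ t in Set.Ioo (0:ℝ) 1,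
      ENNReal.ofReal (t ^ (a i - 1)) * ‖fderiv ℝ v (w t) (Pi.single i 1)‖ₑ := by
    rw [← lintegral_finsetSum _ (fun i _ => by
      exact (by fun_prop : Measurable fun t : ℝ => ENNReal.ofReal (t ^ (a i - 1))).mul
        ((hg i).measurable.comp hwm).enorm)]
    apply setLIntegral_mono' measurableSet_Ioo
    intro t ht
    refine (enorm_sum_le _ _).trans (Finset.sum_le_sum fun i _ => ?_)
    rw [enorm_mul]
    gcongr
    rw [Real.enorm_eq_ofReal_abs]
    apply ENNReal.ofReal_le_ofReal
    have h1 : 0 ≤ t ^ (a i - 1) := Real.rpow_nonneg ht.1.le _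
    have h2 : 0 ≤ z i := hz.1 i
    have h3 : z i ≤ 1 := hz.2 i
    have h4 := (ha0 i).le
    rw [abs_of_nonneg (by positivity)]
    calc a i * t ^ (a i - 1) * z i ≤ 1 * t ^ (a i - 1) * 1 := by gcongr; exact ha1 i
      _ = _ := by ring
  refine le_trans ?_ (add_le_add_right hbound _)
  by_cases hfin : ∫⁻ t in Set.Ioo (0:ℝ) 1, ‖f' t‖ₑ = ⊤
  · simp [hfin]
  have hint : IntegrableOn f' (Set.Ioo 0 1) volume :=
    ⟨hf'm.aestronglyMeasurable, lt_top_iff_ne_top.2 hfin⟩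
  have hint' : IntervalIntegrable f' volume 0 1 := by
    rw [intervalIntegrable_iff_integrableOn_Ioo_of_le zero_le_one]; exact hint
  have hwc : Continuous w := by
    apply continuous_pi; intro j
    exact continuous_const.add ((Real.continuous_rpow_const (ha0 j).le).mul continuous_const)
  have ftc := intervalIntegral.integral_eq_sub_of_hasDerivAt_of_le (f := fun t => v (w t)) (f' := f')
    zero_le_one (hv.continuous.comp hwc).continuousOn (by
      intro t ht
      have hd : HasDerivAt w (fun i => a i * t ^ (a i - 1) * z i) t := by
        rw [hasDerivAt_pi]
        intro i
        exact ((Real.hasDerivAt_rpow_const (Or.inl ht.1.ne')).mul_const (z i)).const_add (x i)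
      have := ((hv.differentiable (by simp)) (w t)).hasFDerivAt.comp_hasDerivAt t hd
      suffices hE : f' t = fderiv ℝ v (w t) (fun i => a i * t ^ (a i - 1) * z i) by
        rw [hE]; exact this
      simp only [hf']
      conv_rhs => rw [pi_eq_sum_univ' (fun i => a i * t ^ (a i - 1) * z i)]
      rw [map_sum]
      refine Finset.sum_congr rfl fun i _ => ?_
      rw [map_smul, smul_eq_mul]) hint'
  have hw0 : w 0 = x := by
    ext j; simp [hw, Real.zero_rpow (ha0 j).ne']
  have hw1 : w 1 = fun j => x j + z j := by
    ext j; simp [hw]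
  simp only [hw0, hw1] at ftc
  have : v x = v (fun j => x j + z j) - ∫ t in (0:ℝ)..1, f' t := by rw [ftc]; ring
  rw [this]
  refine (enorm_sub_le).trans ?_
  gcongr
  rw [intervalIntegral.integral_of_le zero_le_one, integral_Ioc_eq_integral_Ioo]
  exact enorm_integral_le_lintegral_enorm _

lemma st_scale {n : ℕ} (a : Fin n → ℝ) (hA : ∑ i, a i = 1) (F : (Fin n → ℝ) → ENNReal)
    (hF : Measurable F) (x : Fin n → ℝ) (t : ℝ) (ht : 0 < t) :
    ∫⁻ z : Fin n → ℝ, F (fun j => x j + t ^ a j * z j) = ENNReal.ofReal (t⁻¹) * ∫⁻ y, F y := by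
  have hdet : (Matrix.diagonal fun j => t ^ a j).det = t := by
    rw [Matrix.det_diagonal, ← Real.rpow_sum_of_pos ht, hA, Real.rpow_one]
  have h := Real.smul_map_diagonal_volume_pi (D := fun j => t ^ a j) (by rw [hdet]; exact ht.ne')
  rw [hdet, abs_of_pos ht] at h
  have hm : Measurable (Matrix.toLin' (Matrix.diagonal fun j => t ^ a j)) :=
    (LinearMap.continuous_of_finiteDimensional _).measurable
  have h2 : ∫⁻ y, F y = ENNReal.ofReal t * ∫⁻ z : Fin n → ℝ, F (fun j => x j + t ^ a j * z j) := by
    rw [← lintegral_add_left_eq_self F x]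
    conv_lhs => rw [← h]
    rw [lintegral_smul_measure, lintegral_map (by fun_prop) hm, smul_eq_mul]
    congr 2
    ext z
    congr 1
    ext j
    simp [Matrix.mulVec_diagonal]
  rw [h2, ← mul_assoc, ← ENNReal.ofReal_mul (by positivity), inv_mul_cancel₀ ht.ne']
  simp

lemma st_core {n : ℕ} (p : Fin n → ℝ) (hp : ∀ i, 1 ≤ p i) (δ : ℝ) (hδ : 0 < δ)
    (hA : ∑ i, (1 / p i + δ) = 1)
    (v : (Fin n → ℝ) → ℝ) (hv : ContDiff ℝ 1 v) (x : Fin n → ℝ) :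
    ‖v x‖ₑ ≤ (∫⁻ y, ‖v y‖ₑ) + ∑ i, ENNReal.ofReal (1 / δ) *
      (∫⁻ y, ‖fderiv ℝ v y (Pi.single i 1)‖ₑ ^ p i) ^ (1 / p i) := by
  set a : Fin n → ℝ := fun i => 1 / p i + δ with ha
  have hpp : ∀ i, 0 < p i := fun i => by linarith [hp i]
  have ha0 : ∀ i, 0 < a i := fun i => by have := hpp i; simp only [ha]; positivity
  have ha1 : ∀ i, a i ≤ 1 := fun i => by
    rw [← hA]; exact Finset.single_le_sum (f := a) (fun j _ => (ha0 j).le) (Finset.mem_univ i)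
  have hg : ∀ i, Continuous fun y => fderiv ℝ v y (Pi.single i 1) := fun i =>
    (hv.continuous_fderiv (by simp)).clm_apply continuous_const
  set Q := Set.Icc (0 : Fin n → ℝ) 1 with hQ
  have hQ1 : volume Q = 1 := by simp [hQ, Real.volume_Icc_pi]
  have : IsProbabilityMeasure (volume.restrict Q) := ⟨by simp [hQ1]⟩
  have hmeas : ∀ i, Measurable (fun q : (Fin n → ℝ) × ℝ =>
      ENNReal.ofReal (q.2 ^ (a i - 1)) *
        ‖fderiv ℝ v (fun j => x j + q.2 ^ a j * q.1 j) (Pi.single i 1)‖ₑ) := by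
    intro i
    refine (by fun_prop : Measurable fun q : (Fin n → ℝ) × ℝ =>
      ENNReal.ofReal (q.2 ^ (a i - 1))).mul ?_
    have : Measurable (fun q : (Fin n → ℝ) × ℝ => (fun j => x j + q.2 ^ a j * q.1 j)) := by
      rw [measurable_pi_iff]; intro j; fun_prop
    exact ((hg i).measurable.comp this).enorm
  have h1 : ‖v x‖ₑ = ∫⁻ z in Q, ‖v x‖ₑ := by simp
  rw [h1]
  refine (setLIntegral_mono' measurableSet_Icc
    (fun z hz => st_pointwise a ha0 ha1 v hv x z hz)).trans ?_
  have hvm := hv.continuous.measurable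
  rw [lintegral_add_left (by fun_prop)]
  refine add_le_add ?_ ?_
  · refine (setLIntegral_le_lintegral _ _).trans_eq ?_
    exact lintegral_add_left_eq_self (fun y => ‖v y‖ₑ) x
  rw [lintegral_finsetSum _ (fun i _ => (hmeas i).lintegral_prod_right')]
  refine Finset.sum_le_sum fun i _ => ?_
  rw [lintegral_lintegral_swap (hmeas i).aemeasurable]
  set G := (∫⁻ y, ‖fderiv ℝ v y (Pi.single i 1)‖ₑ ^ p i) ^ (1 / p i) with hG
  have hin : ∀ t ∈ Set.Ioo (0:ℝ) 1, ∫⁻ z in Q, ENNReal.ofReal (t ^ (a i - 1)) *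
      ‖fderiv ℝ v (fun j => x j + t ^ a j * z j) (Pi.single i 1)‖ₑ
      ≤ ENNReal.ofReal (t ^ (δ - 1)) * G := by
    intro t ht
    have hm2 : Continuous (fun z : Fin n → ℝ =>
        fderiv ℝ v (fun j => x j + t ^ a j * z j) (Pi.single i 1)) :=
      (hg i).comp (by fun_prop)
    rw [lintegral_const_mul _ (hm2.measurable.enorm)]
    have hol := eLpNorm'_le_eLpNorm'_of_exponent_le one_pos (hp i) (volume.restrict Q)
      hm2.aestronglyMeasurable
    simp only [eLpNorm', ENNReal.rpow_one, div_one] at hol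
    have hsc : (∫⁻ z in Q, ‖fderiv ℝ v (fun j => x j + t ^ a j * z j) (Pi.single i 1)‖ₑ ^ p i)
        ≤ ENNReal.ofReal (t⁻¹) * ∫⁻ y, ‖fderiv ℝ v y (Pi.single i 1)‖ₑ ^ p i := by
      refine (setLIntegral_le_lintegral _ _).trans_eq ?_
      exact st_scale a hA (fun y => ‖fderiv ℝ v y (Pi.single i 1)‖ₑ ^ p i)
        ((hg i).measurable.enorm.pow_const _) x t ht.1
    have hip : 0 ≤ 1 / p i := by have := hpp i; positivity
    calc _ ≤ ENNReal.ofReal (t ^ (a i - 1)) * (ENNReal.ofReal (t⁻¹) *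
          ∫⁻ y, ‖fderiv ℝ v y (Pi.single i 1)‖ₑ ^ p i) ^ (1 / p i) := by
            gcongr
            exact hol.trans (ENNReal.rpow_le_rpow hsc hip)
      _ = _ := by
        rw [ENNReal.mul_rpow_of_nonneg _ _ hip, ← mul_assoc,
          ENNReal.ofReal_rpow_of_nonneg (inv_nonneg.2 ht.1.le) hip,
          ← ENNReal.ofReal_mul (Real.rpow_nonneg ht.1.le _),
          Real.inv_rpow ht.1.le, ← Real.rpow_neg ht.1.le, ← Real.rpow_add ht.1]
        congr 3
        simp only [ha]; ring
  refine (setLIntegral_mono' measurableSet_Ioo hin).trans ?_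
  rw [lintegral_mul_const _ (by fun_prop)]
  gcongr
  have hii : IntervalIntegrable (fun t : ℝ => t ^ (δ - 1)) volume 0 1 :=
    intervalIntegral.intervalIntegrable_rpow' (by linarith)
  rw [intervalIntegrable_iff_integrableOn_Ioo_of_le zero_le_one] at hii
  rw [← ofReal_integral_eq_lintegral_ofReal hii]
  · rw [← integral_Ioc_eq_integral_Ioo, ← intervalIntegral.integral_of_le zero_le_one,
      integral_rpow (Or.inl (by linarith))]
    simp [Real.zero_rpow hδ.ne']
  · exact (ae_restrict_mem measurableSet_Ioo).mono fun t ht => Real.rpow_nonneg ht.1.le _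

lemma st_conv {n : ℕ} (E : Set (EuclideanSpace ℝ (Fin n)))
    (f : EuclideanSpace ℝ (Fin n) → ℝ) (hf : Continuous f)
    (hc : HasCompactSupport f) (hE : ∀ y, y ∉ E → f y = 0) (q : ℝ) (hq : 1 ≤ q) :
    ∫⁻ y : Fin n → ℝ, ‖f (WithLp.toLp 2 y)‖ₑ ^ q = ENNReal.ofReal (∫ y in E, |f y| ^ q) := by
  have hq0 : 0 < q := by linarith
  rw [setIntegral_eq_integral_of_forall_compl_eq_zero (fun y hy => by
    rw [hE y hy, abs_zero, Real.zero_rpow hq0.ne'])]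
  have hcont : Continuous fun y => |f y| ^ q :=
    (Real.continuous_rpow_const hq0.le).comp hf.abs
  have hcs : HasCompactSupport fun y => |f y| ^ q :=
    hc.comp_left (g := fun r : ℝ => |r| ^ q) (by simp [Real.zero_rpow hq0.ne'])
  rw [ofReal_integral_eq_lintegral_ofReal (hcont.integrable_of_hasCompactSupport hcs)
    (Filter.Eventually.of_forall fun y => Real.rpow_nonneg (abs_nonneg _) _)]
  rw [← (PiLp.volume_preserving_toLp (Fin n)).lintegral_comp (by fun_prop)]
  congr 1
  ext y
  rw [Real.enorm_eq_ofReal_abs, ENNReal.ofReal_rpow_of_nonneg (abs_nonneg _) hq0.le]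

theorem sobolev_troisi_supercritical (n : ℕ) (hn : 1 ≤ n) (p : Fin n → ℝ)
    (hp : ∀ i, 1 ≤ p i) (pbar : ℝ)
    (hpbar : 1 / pbar = (1 / n) * ∑ i, 1 / p i) (hpn : (n : ℝ) < pbar)
    (E : Set (EuclideanSpace ℝ (Fin n))) (hEo : IsOpen E) (hEb : Bornology.IsBounded E) :
    ∃ γ₂ > (0 : ℝ),
      ∀ u : EuclideanSpace ℝ (Fin n) → ℝ,
        ContDiff ℝ (⊤ : ℕ∞) u → HasCompactSupport u → tsupport u ⊆ E →
        ∀ x ∈ E, |u x| ≤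
          γ₂ * ((∑ i, (∫ y in E, |fderiv ℝ u y (EuclideanSpace.single i 1)| ^ p i) ^ (1 / p i))
            + ∫ y in E, |u y|) := by
  have hn0 : (0:ℝ) < n := by exact_mod_cast hn
  have hpb : 0 < pbar := hn0.trans hpn
  have hS : ∑ i, 1 / p i < 1 := by
    have h1 : ∑ i, 1 / p i = n / pbar := by
      have : (n:ℝ) / pbar = n * (1 / pbar) := by ring
      rw [this, hpbar]; field_simp
    rw [h1, div_lt_one hpb]; exact hpn
  set δ : ℝ := (1 - ∑ i, 1 / p i) / n with hδd
  have hδ : 0 < δ := div_pos (by linarith) hn0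
  have hA : ∑ i, (1 / p i + δ) = 1 := by
    rw [Finset.sum_add_distrib]
    simp only [Finset.sum_const, Finset.card_univ, Fintype.card_fin, nsmul_eq_mul, hδd]
    field_simp; ring
  refine ⟨1 + 1 / δ, by positivity, ?_⟩
  intro u hu hcu hsu x _
  set L := (PiLp.continuousLinearEquiv 2 ℝ (fun _ : Fin n => ℝ)).symm with hL
  set v : (Fin n → ℝ) → ℝ := u ∘ L with hv
  have hu1 : ContDiff ℝ 1 u := hu.of_le (by exact_mod_cast le_top)
  have hvc : ContDiff ℝ 1 v := hu1.comp L.contDiff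
  have key := st_core p hp δ hδ hA v hvc (WithLp.ofLp x)
  have hder : ∀ i y, fderiv ℝ v y (Pi.single i 1) =
      fderiv ℝ u (WithLp.toLp 2 y) (EuclideanSpace.single i 1) := by
    intro i y
    rw [hv, L.comp_right_fderiv]
    rfl
  simp only [hder] at key
  have hg : ∀ i, Continuous fun y => fderiv ℝ u y (EuclideanSpace.single i (1:ℝ)) := fun i =>
    (hu1.continuous_fderiv (by simp)).clm_apply continuous_const
  have e1 : ∫⁻ y, ‖v y‖ₑ = ENNReal.ofReal (∫ y in E, |u y|) := by
    have := st_conv E u hu.continuous hcu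
      (fun y hy => image_eq_zero_of_notMem_tsupport fun h => hy (hsu h)) 1 le_rfl
    simp only [ENNReal.rpow_one, Real.rpow_one] at this
    exact this
  have e2 : ∀ i, ∫⁻ y : Fin n → ℝ,
      ‖fderiv ℝ u (WithLp.toLp 2 y) (EuclideanSpace.single i 1)‖ₑ ^ p i
      = ENNReal.ofReal (∫ y in E, |fderiv ℝ u y (EuclideanSpace.single i 1)| ^ p i) := by
    intro i
    refine st_conv E (fun y => fderiv ℝ u y (EuclideanSpace.single i 1)) (hg i)
      (hcu.fderiv_apply ℝ _) (fun y hy => ?_) (p i) (hp i)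
    have : fderiv ℝ u y = 0 :=
      image_eq_zero_of_notMem_tsupport fun h => hy (hsu (tsupport_fderiv_subset ℝ h))
    simp [this]
  have hnn : ∀ i, 0 ≤ ∫ y in E, |fderiv ℝ u y (EuclideanSpace.single i 1)| ^ p i := fun i =>
    integral_nonneg fun y => Real.rpow_nonneg (abs_nonneg _) _
  have hnn' : ∀ i, 0 ≤ (∫ y in E, |fderiv ℝ u y (EuclideanSpace.single i 1)| ^ p i) ^ (1 / p i) :=
    fun i => Real.rpow_nonneg (hnn i) _
  have hu0 : 0 ≤ ∫ y in E, |u y| := integral_nonneg fun y => abs_nonneg _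
  have hS0 := Finset.sum_nonneg (s := Finset.univ) fun i _ => hnn' i
  have hd1 : 0 ≤ 1 / δ := by positivity
  rw [e1] at key
  simp only [e2] at key
  have e3 : ∀ i, ENNReal.ofReal (1 / δ) * ENNReal.ofReal
      (∫ y in E, |fderiv ℝ u y (EuclideanSpace.single i 1)| ^ p i) ^ (1 / p i)
      = ENNReal.ofReal (1 / δ *
        (∫ y in E, |fderiv ℝ u y (EuclideanSpace.single i 1)| ^ p i) ^ (1 / p i)) := by
    intro i
    have : 0 ≤ 1 / p i := by have := hp i; positivity
    rw [ENNReal.ofReal_rpow_of_nonneg (hnn i) this, ENNReal.ofReal_mul hd1]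
  simp only [e3] at key
  rw [← ENNReal.ofReal_sum_of_nonneg (fun i _ => mul_nonneg hd1 (hnn' i)), ← Finset.mul_sum,
    ← ENNReal.ofReal_add hu0 (mul_nonneg hd1 hS0), Real.enorm_eq_ofReal_abs,
    ENNReal.ofReal_le_ofReal_iff (add_nonneg hu0 (mul_nonneg hd1 hS0))] at key
  have hvx : v (WithLp.ofLp x) = u x := rfl
  rw [hvx] at key
  refine key.trans ?_
  have := mul_nonneg hd1 hu0
  linarith
end

section
/- Let m ≥ 1 and 1 < p < ∞. There exist constants c₁ = c₁(m,p) > 0 and c₂ = c₂(m,p) > 0 such that for every μ ≥ 0 and all ξ, η ∈ ℝ^m with ξ ≠ η: c₁ (μ² + |ξ|² + |η|²)^{(p−2)/2} ≤ |V_p(ξ) − V_p(η)|² / |ξ − η|² ≤ c₂ (μ² + |ξ|² + |η|²)^{(p−2)/2}, where V_p(ξ) := (μ² + |ξ|²)^{(p−2)/4} ξ. -/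
lemma aux_neg (q A B s t μ : ℝ) (hq : -(1/4) < q) (hq0 : q ≤ 0) (ht : 0 ≤ t) (hts : t ≤ s)
    (hs : 0 < s) (hA : A = μ^2 + s^2) (hB : B = μ^2 + t^2) :
    B ^ q * t ≤ A ^ q * ((s + t) / 2) := by
  have hA0 : 0 < A := by rw [hA]; positivity
  have hB0 : 0 ≤ B := by rw [hB]; positivity
  have haq : 0 < A ^ q := Real.rpow_pos_of_pos hA0 q
  rcases ht.eq_or_lt with h | ht
  · rw [← h]; simp; positivity
  have hB0 : 0 < B := by rw [hB]; positivity
  have hBA : B ≤ A := by rw [hA, hB]; nlinarith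
  set x := B / A with hx
  have hx0 : 0 < x := by positivity
  have hx1 : x ≤ 1 := by rw [hx, div_le_one hA0]; exact hBA
  have hb : B ^ q = A ^ q * x ^ q := by
    rw [← Real.mul_rpow hA0.le hx0.le, hx, mul_div_cancel₀ _ hA0.ne']
  rw [hb, mul_assoc]
  refine mul_le_mul_of_nonneg_left ?_ haq.le
  have h1 : x ^ q ≤ x ^ (-(1/4) : ℝ) := Real.rpow_le_rpow_of_exponent_ge hx0 hx1 hq.le
  set w := x ^ (-(1/4) : ℝ) with hw
  have hw0 : 0 < w := Real.rpow_pos_of_pos hx0 _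
  have hw4 : w ^ 4 * x = 1 := by
    rw [hw, ← Real.rpow_natCast, ← Real.rpow_mul hx0.le]
    norm_num
    rw [Real.rpow_neg_one]; field_simp
  have h2 : t ^ 2 ≤ s ^ 2 * x := by
    rw [hx, ← mul_div_assoc, le_div_iff₀ hA0, hA, hB]
    have : t^2 ≤ s^2 := by nlinarith
    nlinarith [sq_nonneg μ, mul_nonneg (sq_nonneg μ) (sub_nonneg.2 this)]
  have h3 : (t * w^2) ^ 2 ≤ s ^ 2 := by
    calc (t * w^2)^2 = w^4 * t^2 := by ring
      _ ≤ w^4 * (s^2 * x) := by gcongr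
      _ = s^2 * (w^4 * x) := by ring
      _ = s^2 := by rw [hw4, mul_one]
  have h4 : t * w^2 ≤ s := abs_le_of_sq_le_sq' h3 hs.le |>.2
  have h5 : (w * t)^2 ≤ ((s+t)/2)^2 := by
    nlinarith [mul_le_mul_of_nonneg_left h4 ht.le, sq_nonneg (s - t)]
  have h6 : w * t ≤ (s+t)/2 := abs_le_of_sq_le_sq' h5 (by positivity) |>.2
  exact (mul_le_mul_of_nonneg_right h1 ht.le).trans h6

lemma aux_pos (q A B s t μ : ℝ) (hq0 : 0 ≤ q) (ht : 0 ≤ t) (hts : t ≤ s)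
    (hs : 0 < s) (hA : A = μ^2 + s^2) (hB : B = μ^2 + t^2) :
    (A ^ q - B ^ q) * t ≤ A ^ q * ((2 + 2 * q) * (s - t)) := by
  have hA0 : 0 < A := by rw [hA]; positivity
  have hB0 : 0 ≤ B := by rw [hB]; positivity
  have haq : 0 < A ^ q := Real.rpow_pos_of_pos hA0 q
  set x := B / A with hx
  have hBA : B ≤ A := by rw [hA, hB]; nlinarith
  have hx0 : 0 ≤ x := by positivity
  have hx1 : x ≤ 1 := by rw [hx, div_le_one hA0]; exact hBA
  have hb : B ^ q = A ^ q * x ^ q := by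
    rw [← Real.mul_rpow hA0.le hx0, hx, mul_div_cancel₀ _ hA0.ne']
  have h1 : 1 - x ^ q ≤ (1 + q) * (1 - x) := by
    rcases hx0.eq_or_lt with h | h
    · rw [← h]
      have : (0:ℝ) ≤ 0 ^ q := Real.rpow_nonneg le_rfl q
      linarith
    · have h2 : x ^ (1 + q) ≤ x ^ q := Real.rpow_le_rpow_of_exponent_ge h hx1 (by linarith)
      have h3 := one_add_mul_self_le_rpow_one_add (s := x - 1) (by linarith) (p := 1 + q) (by linarith)
      rw [add_sub_cancel] at h3
      linarith
  have h2 : (1 - x) * t ≤ 2 * (s - t) := by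
    have : 1 - x = (s - t) * (s + t) / A := by
      rw [hx, eq_div_iff hA0.ne', sub_mul, div_mul_cancel₀ _ hA0.ne', hA, hB]; ring
    rw [this, div_mul_eq_mul_div, div_le_iff₀ hA0]
    have h : (s + t) * t ≤ 2 * A := by rw [hA]; nlinarith [sq_nonneg μ]
    nlinarith [mul_le_mul_of_nonneg_left h (sub_nonneg.2 hts)]
  have h3 : (1 - x^q) * t ≤ (2 + 2*q) * (s - t) := by
    calc (1 - x^q) * t ≤ (1+q)*(1-x) * t := by gcongr
      _ = (1+q) * ((1-x)*t) := by ring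
      _ ≤ (1+q) * (2 * (s-t)) := by gcongr
      _ = _ := by ring
  rw [hb]
  calc _ = A^q * ((1 - x^q) * t) := by ring
    _ ≤ _ := by gcongr

lemma aux_S (r A S : ℝ) (hA : 0 < A) (h1 : A ≤ S) (h2 : S ≤ 2 * A) :
    S ^ r ≤ 2 ^ |r| * A ^ r ∧ A ^ r ≤ 2 ^ |r| * S ^ r := by
  have hS : 0 < S := by linarith
  have h1' : (1:ℝ) ≤ 2 ^ |r| := Real.one_le_rpow (by norm_num) (abs_nonneg r)
  have pA := Real.rpow_pos_of_pos hA r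
  have pS := Real.rpow_pos_of_pos hS r
  rcases le_total 0 r with hr | hr
  · have e1 : A ^ r ≤ S ^ r := Real.rpow_le_rpow hA.le h1 hr
    have e2 : S ^ r ≤ (2 * A) ^ r := Real.rpow_le_rpow hS.le h2 hr
    rw [Real.mul_rpow (by norm_num) hA.le] at e2
    rw [abs_of_nonneg hr] at *
    exact ⟨e2, by nlinarith⟩
  · have e1 : S ^ r ≤ A ^ r := Real.rpow_le_rpow_of_nonpos hA h1 hr
    have e2 : (2 * A) ^ r ≤ S ^ r := Real.rpow_le_rpow_of_nonpos hS h2 hr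
    rw [Real.mul_rpow (by norm_num) hA.le] at e2
    refine ⟨by nlinarith, ?_⟩
    rw [abs_of_nonpos hr] at *
    have : (2:ℝ) ^ (-r) * 2 ^ r = 1 := by
      rw [← Real.rpow_add (by norm_num)]; simp
    calc A ^ r = 2 ^ (-r) * (2 ^ r * A ^ r) := by rw [← mul_assoc, this, one_mul]
      _ ≤ _ := by gcongr

lemma aux_main {E : Type*} [NormedAddCommGroup E] [InnerProductSpace ℝ E] (q μ : ℝ)
    (hq : -(1/4) < q) (ξ η : E) (hne : ξ ≠ η) (hle : ‖η‖ ≤ ‖ξ‖) :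
    (1 / (4 * 2 ^ |2 * q|)) * (μ ^ 2 + ‖ξ‖ ^ 2 + ‖η‖ ^ 2) ^ (2 * q) ≤
      ‖(μ ^ 2 + ‖ξ‖ ^ 2) ^ q • ξ - (μ ^ 2 + ‖η‖ ^ 2) ^ q • η‖ ^ 2 / ‖ξ - η‖ ^ 2 ∧
    ‖(μ ^ 2 + ‖ξ‖ ^ 2) ^ q • ξ - (μ ^ 2 + ‖η‖ ^ 2) ^ q • η‖ ^ 2 / ‖ξ - η‖ ^ 2 ≤
      ((3 + 2 * |q|) ^ 2 * 2 ^ |2 * q|) * (μ ^ 2 + ‖ξ‖ ^ 2 + ‖η‖ ^ 2) ^ (2 * q) := by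
  have ht : 0 ≤ ‖η‖ := norm_nonneg _
  have hs : 0 < ‖ξ‖ := by
    rcases (norm_nonneg ξ).eq_or_lt with h | h
    · exfalso; apply hne
      rw [norm_eq_zero.1 h.symm, norm_eq_zero.1 (le_antisymm (h ▸ hle) ht)]
    · exact h
  have hd : 0 < ‖ξ - η‖ := norm_pos_iff.2 (sub_ne_zero.2 hne)
  have hA0 : 0 < μ^2 + ‖ξ‖^2 := by positivity
  have hB0 : 0 ≤ μ^2 + ‖η‖^2 := by positivity
  obtain ⟨k1, k2⟩ := aux_S (2*q) (μ^2+‖ξ‖^2) (μ ^ 2 + ‖ξ‖ ^ 2 + ‖η‖ ^ 2) hA0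
    (by nlinarith) (by nlinarith [sq_nonneg μ])
  have hneg := fun h => aux_neg q _ _ ‖ξ‖ ‖η‖ μ hq h ht hle hs rfl rfl
  have hpos := fun h => aux_pos q _ _ ‖ξ‖ ‖η‖ μ h ht hle hs rfl rfl
  have hmono : (0 ≤ q ∧ (μ^2+‖η‖^2)^q ≤ (μ^2+‖ξ‖^2)^q) ∨
      (q ≤ 0 ∧ ((μ^2+‖ξ‖^2)^q ≤ (μ^2+‖η‖^2)^q ∨ ‖η‖ = 0)) := by
    have hBA : μ^2+‖η‖^2 ≤ μ^2+‖ξ‖^2 := by nlinarith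
    rcases le_total 0 q with h | h
    · exact Or.inl ⟨h, Real.rpow_le_rpow hB0 hBA h⟩
    · refine Or.inr ⟨h, ?_⟩
      rcases ht.eq_or_lt with h' | h'
      · exact Or.inr h'.symm
      · exact Or.inl (Real.rpow_le_rpow_of_nonpos (by positivity) hBA h)
  have hsq : (μ^2+‖ξ‖^2) ^ (2*q) = ((μ^2+‖ξ‖^2)^q)^2 := by
    rw [mul_comm, Real.rpow_mul hA0.le]; norm_num
  have ha : 0 < (μ^2+‖ξ‖^2)^q := Real.rpow_pos_of_pos hA0 q
  have hb : 0 ≤ (μ^2+‖η‖^2)^q := Real.rpow_nonneg hB0 q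
  rw [hsq] at k1 k2
  generalize (μ^2+‖ξ‖^2)^q = a at *
  generalize (μ^2+‖η‖^2)^q = b at *
  generalize (μ ^ 2 + ‖ξ‖ ^ 2 + ‖η‖ ^ 2) ^ (2 * q) = S at *
  have hk : (0:ℝ) < 2 ^ |2*q| := by positivity
  generalize (2:ℝ) ^ |2*q| = k at *
  have hdst : ‖ξ‖ - ‖η‖ ≤ ‖ξ - η‖ := norm_sub_norm_le _ _
  -- upper
  have hup : ‖a • ξ - b • η‖ ≤ (3 + 2 * |q|) * a * ‖ξ - η‖ := by
    have e : a • ξ - b • η = a • (ξ - η) + (a - b) • η := by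
      rw [smul_sub, sub_smul]; abel
    have h1 : ‖a • ξ - b • η‖ ≤ a * ‖ξ - η‖ + |a - b| * ‖η‖ := by
      rw [e]
      refine (norm_add_le _ _).trans ?_
      rw [norm_smul, norm_smul, Real.norm_eq_abs, Real.norm_eq_abs, abs_of_pos ha]
    have h2 : |a - b| * ‖η‖ ≤ a * ((2 + 2 * |q|) * (‖ξ‖ - ‖η‖)) := by
      have hc : 0 ≤ a * ((1 + 2 * |q|) * (‖ξ‖ - ‖η‖)) :=
        mul_nonneg ha.le (mul_nonneg (by positivity) (by linarith))
      have hc2 : 0 ≤ a * (‖ξ‖ - ‖η‖) := mul_nonneg ha.le (by linarith)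
      rcases hmono with ⟨h, hab⟩ | ⟨h, hab | hab⟩
      · rw [abs_of_nonneg (sub_nonneg.2 hab), abs_of_nonneg h]; exact hpos h
      · rw [abs_of_nonpos (sub_nonpos.2 hab)]
        have := hneg h
        nlinarith
      · have z : |a - b| * ‖η‖ = 0 := by rw [hab, mul_zero]
        linarith
    have h3 : a * ((2 + 2 * |q|) * (‖ξ‖ - ‖η‖)) ≤ a * ((2 + 2 * |q|) * ‖ξ - η‖) := by gcongr
    nlinarith
  -- lower
  have hlow : a ^ 2 * ‖ξ - η‖ ^ 2 ≤ 4 * ‖a • ξ - b • η‖ ^ 2 := by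
    have e1 : ‖a • ξ - b • η‖ ^ 2 = a^2 * ‖ξ‖^2 - 2 * (a * b * inner ℝ ξ η) + b^2 * ‖η‖^2 := by
      rw [norm_sub_sq_real, norm_smul, norm_smul, real_inner_smul_left, real_inner_smul_right,
        Real.norm_eq_abs, Real.norm_eq_abs, mul_pow, mul_pow, sq_abs, sq_abs]; ring
    have e2 : ‖ξ - η‖ ^ 2 = ‖ξ‖^2 - 2 * inner ℝ ξ η + ‖η‖^2 := norm_sub_sq_real _ _
    have hi : inner ℝ ξ η ≤ ‖ξ‖ * ‖η‖ := real_inner_le_norm _ _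
    rcases hmono with ⟨h, hab⟩ | ⟨h, hab | hab⟩
    · have c1 : inner ℝ (a • ξ - b • η) (ξ - η) ≤ ‖a • ξ - b • η‖ * ‖ξ - η‖ :=
        real_inner_le_norm _ _
      have c2 : inner ℝ (a • ξ - b • η) (ξ - η) =
          a * ‖ξ‖^2 + b * ‖η‖^2 - (a + b) * inner ℝ ξ η := by
        rw [inner_sub_left, inner_sub_right, inner_sub_right, real_inner_smul_left,
          real_inner_smul_left, real_inner_smul_left, real_inner_smul_left,
          real_inner_self_eq_norm_sq, real_inner_self_eq_norm_sq, real_inner_comm ξ η]; ring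
      have c3 : a / 2 * ‖ξ - η‖ ^ 2 ≤ ‖a • ξ - b • η‖ * ‖ξ - η‖ := by
        refine le_trans ?_ c1
        have : a * ‖ξ‖^2 + b * ‖η‖^2 - (a + b) * inner ℝ ξ η =
          (a + b) / 2 * ‖ξ - η‖^2 + (a - b) / 2 * (‖ξ‖^2 - ‖η‖^2) := by rw [e2]; ring
        rw [c2, this]
        have q1 : 0 ≤ (a - b) / 2 * (‖ξ‖^2 - ‖η‖^2) :=
          mul_nonneg (by linarith) (by nlinarith)
        have q2 : 0 ≤ b / 2 * ‖ξ - η‖^2 := by positivity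
        linarith
      have c4 : a / 2 * ‖ξ - η‖ ≤ ‖a • ξ - b • η‖ := by
        refine le_of_mul_le_mul_right ?_ hd
        linarith
      have c5 : (a / 2 * ‖ξ - η‖)^2 ≤ ‖a • ξ - b • η‖^2 := by gcongr
      linarith
    · have g := hneg h
      have g1 : 0 ≤ a * ((‖ξ‖ - ‖η‖) / 2) := mul_nonneg ha.le (by linarith)
      have g2 : (a * ((‖ξ‖ - ‖η‖) / 2)) ^ 2 ≤ (a * ‖ξ‖ - b * ‖η‖)^2 := by
        apply pow_le_pow_left₀ g1; linarith
      have g3 : 0 ≤ (a * (b - a)) * (‖ξ‖ * ‖η‖ - inner ℝ ξ η) :=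
        mul_nonneg (mul_nonneg ha.le (by linarith)) (by linarith)
      have g4 : 0 ≤ a^2 * (‖ξ‖ * ‖η‖ - inner ℝ ξ η) := mul_nonneg (by positivity) (by linarith)
      rw [e1, e2]
      nlinarith
    · have : η = 0 := norm_eq_zero.1 hab
      subst this
      simp only [smul_zero, sub_zero, norm_smul, Real.norm_eq_abs, mul_pow, sq_abs]
      have : 0 ≤ a^2 * ‖ξ‖^2 := by positivity
      linarith
  have hd2 : 0 < ‖ξ - η‖^2 := by positivity
  constructor
  · rw [le_div_iff₀ hd2]
    have : 1 / (4 * k) * S ≤ a^2 / 4 := by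
      rw [div_mul_eq_mul_div, div_le_iff₀ (by positivity)]; linarith
    have := mul_le_mul_of_nonneg_right this hd2.le
    linarith
  · rw [div_le_iff₀ hd2]
    calc ‖a • ξ - b • η‖ ^ 2 ≤ ((3 + 2 * |q|) * a * ‖ξ - η‖)^2 := by gcongr
      _ = (3 + 2 * |q|)^2 * a^2 * ‖ξ - η‖^2 := by ring
      _ ≤ (3 + 2 * |q|)^2 * (k * S) * ‖ξ - η‖^2 := by gcongr
      _ = _ := by ring


/-- For `1 < p < ∞` there are constants `c₁, c₂ > 0` (depending on `m, p`) such that for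
`V_p(ξ) = (μ² + |ξ|²)^{(p-2)/4} ξ` one has
`c₁ (μ² + |ξ|² + |η|²)^{(p-2)/2} ≤ |V_p ξ - V_p η|² / |ξ - η|² ≤ c₂ (μ² + |ξ|² + |η|²)^{(p-2)/2}`. -/
theorem Vp_estimate (m : ℕ) (hm : 1 ≤ m) (p : ℝ) (hp : 1 < p) :
    ∃ c₁ > (0 : ℝ), ∃ c₂ > (0 : ℝ),
      ∀ μ : ℝ, 0 ≤ μ → ∀ ξ η : EuclideanSpace ℝ (Fin m), ξ ≠ η →
        c₁ * (μ ^ 2 + ‖ξ‖ ^ 2 + ‖η‖ ^ 2) ^ ((p - 2) / 2) ≤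
          ‖(μ ^ 2 + ‖ξ‖ ^ 2) ^ ((p - 2) / 4) • ξ - (μ ^ 2 + ‖η‖ ^ 2) ^ ((p - 2) / 4) • η‖ ^ 2
            / ‖ξ - η‖ ^ 2 ∧
        ‖(μ ^ 2 + ‖ξ‖ ^ 2) ^ ((p - 2) / 4) • ξ - (μ ^ 2 + ‖η‖ ^ 2) ^ ((p - 2) / 4) • η‖ ^ 2
            / ‖ξ - η‖ ^ 2 ≤
          c₂ * (μ ^ 2 + ‖ξ‖ ^ 2 + ‖η‖ ^ 2) ^ ((p - 2) / 2) := by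
  have e : (p - 2) / 2 = 2 * ((p - 2) / 4) := by ring
  rw [e]
  have hq : -(1/4) < (p - 2) / 4 := by linarith
  generalize (p - 2) / 4 = q at *
  refine ⟨1 / (4 * 2 ^ |2 * q|), by positivity, (3 + 2 * |q|) ^ 2 * 2 ^ |2 * q|, by positivity, ?_⟩
  intro μ _ ξ η hne
  rcases le_total ‖η‖ ‖ξ‖ with h | h
  · exact aux_main q μ hq ξ η hne h
  · have := aux_main q μ hq η ξ hne.symm h
    rw [norm_sub_rev ξ η, norm_sub_rev (_ • ξ) (_ • η), add_right_comm]
    exact this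
end
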